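/- arXiv:1207.6371 — 8 statements merged into one kernel-verified Lean document; each statement's English description precedes it below -/
import Mathlib

section
/- For every weighted graph G with terminal set K of size k, there exists a mimicking network H for (G,K) whose number of vertices is at most M(k−1), the (k−1)-st Dedekind number, i.e. the number of antichains in the power set of a (k−1)-element set ordered by inclusion. -/
open scoped Classical

/-- A weighted graph with a distinguished embedded set of terminals indexed by `κ`:
a finite vertex type `V`, an embedding `ι : κ ↪ V` of the terminals, and a symmetric
nonnegative capacity function `c` on pairs of vertices. -/
structure WeightedGraph (κ : Type) where
  V : Type
  [fintypeV : Fintype V]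
  ι : κ ↪ V
  c : V → V → ℝ
  symm : ∀ u v, c u v = c v u
  nonneg : ∀ u v, 0 ≤ c u v

namespace WeightedGraph

variable {κ : Type}

instance (G : WeightedGraph κ) : Fintype G.V := G.fintypeV

/-- The cut function `h_G(A) = Σ_{u ∈ A, v ∉ A} c(u,v)`. -/
noncomputable def cutval (G : WeightedGraph κ) (A : Finset G.V) : ℝ :=
  ∑ u ∈ A, ∑ v ∈ Aᶜ, G.c u v

/-- The vertex sets realizing the terminal partition `(U, K \ U)`. -/
noncomputable def cutSets (G : WeightedGraph κ) (U : Finset κ) : Finset (Finset G.V) :=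
  Finset.univ.filter fun A => ∀ x : κ, G.ι x ∈ A ↔ x ∈ U

theorem cutSets_nonempty (G : WeightedGraph κ) (U : Finset κ) : (G.cutSets U).Nonempty := by
  refine ⟨U.image G.ι, ?_⟩
  simp [cutSets, Finset.mem_image, G.ι.injective.eq_iff]

/-- The terminal cut function `h_K^G(U) = min { h_G(A) : A ∩ K = U }`. -/
noncomputable def termCut (G : WeightedGraph κ) (U : Finset κ) : ℝ :=
  (G.cutSets U).inf' (G.cutSets_nonempty U) G.cutval

/-- `H` is a mimicking network for `(G, K)`: all minimum terminal cut values agree. -/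
def IsMimicking (G H : WeightedGraph κ) : Prop :=
  ∀ U : Finset κ, H.termCut U = G.termCut U

/-- `H` is a quotient (contraction) of `G` along the surjection `f`: terminals map to
terminals, and capacities between distinct classes are sums of the original capacities. -/
def IsQuotient (G H : WeightedGraph κ) (f : G.V → H.V) : Prop :=
  Function.Surjective f ∧ (∀ x : κ, f (G.ι x) = H.ι x) ∧
    ∀ y z : H.V, y ≠ z →
      H.c y z = ∑ u ∈ Finset.univ.filter (fun u => f u = y),
        ∑ v ∈ Finset.univ.filter (fun v => f v = z), G.c u v

end WeightedGraph

/-- The `n`-th Dedekind number: the number of antichains in the power set of an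
`n`-element set ordered by inclusion. -/
noncomputable def dedekind (n : ℕ) : ℕ :=
  Nat.card {A : Finset (Finset (Fin n)) // IsAntichain (· ⊆ ·) (A : Set (Finset (Fin n)))}

namespace WeightedGraph

variable {κ : Type}

theorem aux_mem_cutSets (G : WeightedGraph κ) (U : Finset κ) (A : Finset G.V) :
    A ∈ G.cutSets U ↔ ∀ x : κ, G.ι x ∈ A ↔ x ∈ U := by
  simp [cutSets]

theorem aux_cutval_eq (G : WeightedGraph κ) (A : Finset G.V) :
    G.cutval A = ∑ u, ∑ v, if u ∈ A ∧ v ∉ A then G.c u v else 0 := by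
  unfold cutval
  rw [← Finset.sum_filter_add_sum_filter_not Finset.univ (fun u => u ∈ A)]
  have h2 : ∑ u ∈ Finset.univ.filter (fun u => ¬ u ∈ A),
      ∑ v, (if u ∈ A ∧ v ∉ A then G.c u v else 0) = 0 := by
    apply Finset.sum_eq_zero
    intro u hu
    have : u ∉ A := by simpa using hu
    simp [this]
  rw [h2, add_zero]
  have h1 : Finset.univ.filter (fun u => u ∈ A) = A := by ext; simp
  rw [h1]
  refine Finset.sum_congr rfl fun u hu => ?_
  simp only [hu, true_and]
  rw [← Finset.sum_filter]
  refine Finset.sum_congr ?_ fun _ _ => rfl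
  ext; simp

theorem aux_submod (G : WeightedGraph κ) (A B : Finset G.V) :
    G.cutval (A ∩ B) + G.cutval (A ∪ B) ≤ G.cutval A + G.cutval B := by
  simp only [aux_cutval_eq, ← Finset.sum_add_distrib]
  refine Finset.sum_le_sum fun u _ => Finset.sum_le_sum fun v _ => ?_
  have := G.nonneg u v
  by_cases h1 : u ∈ A <;> by_cases h2 : u ∈ B <;> by_cases h3 : v ∈ A <;>
    by_cases h4 : v ∈ B <;> simp [h1, h2, h3, h4, this]

theorem aux_compl (G : WeightedGraph κ) (A : Finset G.V) :
    G.cutval Aᶜ = G.cutval A := by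
  unfold cutval
  rw [compl_compl, Finset.sum_comm]
  exact Finset.sum_congr rfl fun u _ => Finset.sum_congr rfl fun v _ => G.symm _ _

theorem aux_termCut_le (G : WeightedGraph κ) {U : Finset κ} {A : Finset G.V}
    (h : A ∈ G.cutSets U) : G.termCut U ≤ G.cutval A :=
  Finset.inf'_le _ h

theorem aux_exists_min (G : WeightedGraph κ) (U : Finset κ) :
    ∃ A ∈ G.cutSets U, G.cutval A = G.termCut U ∧
      ∀ B ∈ G.cutSets U, G.cutval B = G.termCut U → A.card ≤ B.card := by
  obtain ⟨A, hA, hA'⟩ := Finset.exists_mem_eq_inf' (G.cutSets_nonempty U) G.cutval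
  obtain ⟨C, hC, hC'⟩ := Finset.exists_min_image
    ((G.cutSets U).filter fun B => G.cutval B = G.termCut U) Finset.card
    ⟨A, by simp only [Finset.mem_filter]; exact ⟨hA, hA'.symm⟩⟩
  simp only [Finset.mem_filter] at hC hC'
  exact ⟨C, hC.1, hC.2, fun B hB hB' => hC' B ⟨hB, hB'⟩⟩

theorem aux_mono (G : WeightedGraph κ) {U W : Finset κ} (hUW : U ⊆ W) {A B : Finset G.V}
    (hA : A ∈ G.cutSets U) (hA1 : G.cutval A = G.termCut U)
    (hA2 : ∀ B ∈ G.cutSets U, G.cutval B = G.termCut U → A.card ≤ B.card)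
    (hB : B ∈ G.cutSets W) (hB1 : G.cutval B = G.termCut W) : A ⊆ B := by
  have hi : A ∩ B ∈ G.cutSets U := by
    rw [aux_mem_cutSets] at *
    intro x
    rw [Finset.mem_inter, hA, hB]
    exact ⟨fun h => h.1, fun h => ⟨h, hUW h⟩⟩
  have hu : A ∪ B ∈ G.cutSets W := by
    rw [aux_mem_cutSets] at *
    intro x
    rw [Finset.mem_union, hA, hB]
    exact ⟨fun h => h.elim (fun h => hUW h) id, Or.inr⟩
  have h1 := G.aux_termCut_le hi
  have h2 := G.aux_termCut_le hu
  have h3 := G.aux_submod A B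
  have h4 := hA2 _ hi (by linarith)
  have h5 := Finset.eq_of_subset_of_card_le Finset.inter_subset_left h4
  exact Finset.inter_eq_left.mp h5

/-- The contraction of `G` along a map `f` that separates the terminals. -/
noncomputable def auxQuot (G : WeightedGraph κ) {W : Type} [Fintype W] (f : G.V → W)
    (hf : Function.Injective fun x => f (G.ι x)) : WeightedGraph κ where
  V := W
  ι := ⟨fun x => f (G.ι x), hf⟩
  c y z := ∑ u ∈ Finset.univ.filter (fun u => f u = y),
        ∑ v ∈ Finset.univ.filter (fun v => f v = z), G.c u v
  symm y z := by
    rw [Finset.sum_comm]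
    exact Finset.sum_congr rfl fun u _ => Finset.sum_congr rfl fun v _ => G.symm _ _
  nonneg y z := Finset.sum_nonneg fun u _ => Finset.sum_nonneg fun v _ => G.nonneg _ _

theorem aux_fiber {V W : Type} [Fintype V] [Fintype W] (f : V → W) (B : Finset W) (g : V → ℝ) :
    ∑ y ∈ B, ∑ u ∈ Finset.univ.filter (fun u => f u = y), g u
      = ∑ u ∈ Finset.univ.filter (fun u => f u ∈ B), g u := by
  rw [← Finset.sum_fiberwise_of_maps_to (s := Finset.univ.filter (fun u => f u ∈ B)) (t := B)
    (g := f) (by intro u hu; simpa using hu)]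
  refine Finset.sum_congr rfl fun y hy => Finset.sum_congr ?_ fun _ _ => rfl
  ext u
  simp only [Finset.mem_filter, Finset.mem_univ, true_and]
  exact ⟨fun h => ⟨h ▸ hy, h⟩, fun h => h.2⟩

theorem auxQuot_cutval (G : WeightedGraph κ) {W : Type} [Fintype W] (f : G.V → W)
    (hf : Function.Injective fun x => f (G.ι x)) (B : Finset W) :
    (G.auxQuot f hf).cutval B = G.cutval (Finset.univ.filter fun u => f u ∈ B) := by
  have h : (G.auxQuot f hf).cutval B = ∑ y ∈ B, ∑ z ∈ Bᶜ,
      ∑ u ∈ Finset.univ.filter (fun u => f u = y),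
        ∑ v ∈ Finset.univ.filter (fun v => f v = z), G.c u v := by
    unfold cutval
    refine Finset.sum_congr rfl fun y _ => Finset.sum_congr ?_ fun _ _ => rfl
    ext z
    exact Finset.mem_compl.trans (Finset.mem_compl (s := B) (a := (z : W))).symm
  rw [h]
  have h2 : (Finset.univ.filter fun u => f u ∈ B)ᶜ = Finset.univ.filter fun u => f u ∈ Bᶜ := by
    ext; simp
  unfold cutval
  rw [h2, ← aux_fiber f B]
  refine Finset.sum_congr rfl fun y _ => ?_
  rw [Finset.sum_comm]
  exact Finset.sum_congr rfl fun u _ => aux_fiber f Bᶜ _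

theorem auxQuot_mimicking (G : WeightedGraph κ) {W : Type} [Fintype W] (f : G.V → W)
    (hf : Function.Injective fun x => f (G.ι x))
    (h : ∀ U : Finset κ, ∃ A ∈ G.cutSets U, G.cutval A = G.termCut U ∧
      ∀ u v, f u = f v → u ∈ A → v ∈ A) : IsMimicking G (G.auxQuot f hf) := by
  intro U
  apply le_antisymm
  · obtain ⟨A, hA, hA1, hA2⟩ := h U
    have hpre : (Finset.univ.filter fun u => f u ∈ A.image f) = A := by
      ext u
      simp only [Finset.mem_filter, Finset.mem_univ, true_and, Finset.mem_image]
      exact ⟨fun ⟨v, hv, e⟩ => hA2 v u e hv, fun hu => ⟨u, hu, rfl⟩⟩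
    rw [← hA1, ← hpre, ← auxQuot_cutval G f hf]
    apply aux_termCut_le
    rw [aux_mem_cutSets] at hA
    refine (aux_mem_cutSets _ _ _).mpr fun x => ?_
    rw [← hA x]
    conv_rhs => rw [← hpre]
    rw [Finset.mem_filter]
    exact ⟨fun hh => ⟨Finset.mem_univ _, hh⟩, fun hh => hh.2⟩
  · refine Finset.le_inf' _ _ fun (B : Finset W) hB => ?_
    refine le_of_le_of_eq (aux_termCut_le G ?_) (auxQuot_cutval G f hf B).symm
    have hB' := (aux_mem_cutSets _ _ _).mp hB
    refine (aux_mem_cutSets _ _ _).mpr fun x => ?_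
    rw [← hB' x, Finset.mem_filter]
    exact ⟨fun hh => hh.2, fun hh => ⟨Finset.mem_univ _, hh⟩⟩

end WeightedGraph

/-- Up-sets of a finite Boolean lattice are at most as many as antichains. -/
theorem aux_card_le_dedekind (n : ℕ) (S : Set (Finset (Finset (Fin n)))) [Fintype S]
    (hS : ∀ F ∈ S, ∀ U ∈ F, ∀ W, U ⊆ W → W ∈ F) : Fintype.card S ≤ dedekind n := by
  unfold dedekind
  rw [← Nat.card_eq_fintype_card]
  let m : Finset (Finset (Fin n)) → Finset (Finset (Fin n)) := fun F =>
    F.filter fun U => ∀ W ∈ F, W ⊆ U → W = U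
  have hm : ∀ F ∈ S, ∀ U, U ∈ F ↔ ∃ W ∈ m F, W ⊆ U := by
    intro F hF U
    constructor
    · intro hU
      obtain ⟨W, hW, hW'⟩ := Finset.exists_min_image (F.filter fun W => W ⊆ U) Finset.card
        ⟨U, by simp [hU]⟩
      simp only [Finset.mem_filter] at hW hW'
      refine ⟨W, ?_, hW.2⟩
      simp only [m, Finset.mem_filter]
      refine ⟨hW.1, fun X hX hXW => ?_⟩
      exact Finset.eq_of_subset_of_card_le hXW (hW' X ⟨hX, hXW.trans hW.2⟩)
    · rintro ⟨W, hW, hWU⟩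
      exact hS F hF W (Finset.mem_filter.mp hW).1 U hWU
  refine Nat.card_le_card_of_injective (fun F : S => ⟨m F.1, ?_⟩) ?_
  · intro U hU W hW hne hsub
    simp only [m, Finset.coe_filter, Set.mem_ofPred_eq] at hU hW
    exact hne (hW.2 U hU.1 hsub)
  · intro F F' hFF
    have e : m F.1 = m F'.1 := congrArg Subtype.val hFF
    apply Subtype.ext
    ext U
    rw [hm _ F.2, hm _ F'.2, e]

/-- every weighted graph with `k` terminals has a mimicking network with at
most `M(k-1)` (the `(k-1)`-st Dedekind number) vertices. -/
theorem mimicking_network_upper_bound (k : ℕ) (G : WeightedGraph (Fin k)) :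
    ∃ H : WeightedGraph (Fin k), WeightedGraph.IsMimicking G H ∧
      Fintype.card H.V ≤ dedekind (k - 1) := by
  cases k with
  | zero =>
    let S : Set (Finset (Finset (Fin 0))) := {∅}
    have hS : ∀ F ∈ S, ∀ U ∈ F, ∀ W, U ⊆ W → W ∈ F := by
      rintro F rfl U hU
      simp at hU
    refine ⟨G.auxQuot (fun _ => (⟨∅, rfl⟩ : S)) (fun x => x.elim0), ?_, ?_⟩
    · apply WeightedGraph.auxQuot_mimicking
      intro U
      have h0 : (∅ : Finset G.V) ∈ G.cutSets U := by
        rw [WeightedGraph.aux_mem_cutSets]; exact fun x => x.elim0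
      refine ⟨∅, h0, ?_, by simp⟩
      apply le_antisymm _ (G.aux_termCut_le h0)
      refine Finset.le_inf' _ _ fun B hB => ?_
      have : G.cutval ∅ = 0 := by simp [WeightedGraph.cutval]
      rw [this]
      exact Finset.sum_nonneg fun u _ => Finset.sum_nonneg fun v _ => G.nonneg _ _
    · exact aux_card_le_dedekind 0 S hS
  | succ n =>
    choose A hA hA1 hA2 using fun U : Finset (Fin n) => G.aux_exists_min (U.map (Fin.succEmb n))
    have hAm : ∀ U W, U ⊆ W → A U ⊆ A W := fun U W h =>
      G.aux_mono (Finset.map_subset_map.mpr h) (hA U) (hA1 U) (hA2 U) (hA W) (hA1 W)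
    let sig : G.V → Finset (Finset (Fin n)) := fun v => Finset.univ.filter fun U => v ∈ A U
    have hsig : ∀ v U, U ∈ sig v ↔ v ∈ A U := by simp [sig]
    let f : G.V → Set.range sig := fun v => ⟨sig v, v, rfl⟩
    have hf' : ∀ u v, f u = f v → ∀ U, u ∈ A U ↔ v ∈ A U := by
      intro u v h U
      have : sig u = sig v := congrArg Subtype.val h
      rw [← hsig, ← hsig, this]
    have hterm : ∀ U x, G.ι x ∈ A U ↔ x ∈ U.map (Fin.succEmb n) := fun U =>
      (G.aux_mem_cutSets _ _).mp (hA U)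
    have hf : Function.Injective fun x => f (G.ι x) := by
      intro x y hxy
      have h := fun U => (hterm U x).symm.trans ((hf' _ _ hxy U).trans (hterm U y))
      induction x using Fin.cases with
      | zero =>
        induction y using Fin.cases with
        | zero => rfl
        | succ j => simpa using h {j}
      | succ i =>
        have h2 : y ∈ ({i} : Finset (Fin n)).map (Fin.succEmb n) := (h {i}).mp (by simp)
        rw [Finset.map_singleton, Finset.mem_singleton] at h2
        exact h2.symm
    refine ⟨G.auxQuot f hf, ?_, ?_⟩
    · apply WeightedGraph.auxQuot_mimicking
      have key : ∀ U : Finset (Fin (n+1)), 0 ∉ U → ∃ A ∈ G.cutSets U, G.cutval A = G.termCut U ∧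
          ∀ u v, f u = f v → u ∈ A → v ∈ A := by
        intro U h0
        have hU : (Finset.univ.filter fun i : Fin n => i.succ ∈ U).map (Fin.succEmb n) = U := by
          ext x
          induction x using Fin.cases with
          | zero => simp [h0]
          | succ i => simp
        have a := hA (Finset.univ.filter fun i : Fin n => i.succ ∈ U)
        have b := hA1 (Finset.univ.filter fun i : Fin n => i.succ ∈ U)
        rw [hU] at a b
        exact ⟨_, a, b, fun u v h => (hf' u v h _).mp⟩
      have hcs : ∀ U B, B ∈ G.cutSets U → Bᶜ ∈ G.cutSets Uᶜ := by
        intro U B hB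
        rw [WeightedGraph.aux_mem_cutSets] at *
        intro x
        simp [hB x]
      intro U
      by_cases h0 : 0 ∈ U
      · obtain ⟨B, hB, hB1, hB2⟩ := key Uᶜ (by simpa using h0)
        have hB' := hcs _ _ hB
        rw [compl_compl] at hB'
        refine ⟨Bᶜ, hB', ?_, ?_⟩
        · apply le_antisymm _ (G.aux_termCut_le hB')
          refine Finset.le_inf' _ _ fun C hC => ?_
          rw [G.aux_compl, hB1, ← G.aux_compl C]
          exact G.aux_termCut_le (hcs _ _ hC)
        · intro u v h hu
          rw [Finset.mem_compl] at *
          exact fun hv => hu (hB2 v u h.symm hv)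
      · exact key U h0
    · refine aux_card_le_dedekind n (Set.range sig) ?_
      rintro F ⟨v, rfl⟩ U hU W hUW
      rw [hsig] at *
      exact hAm U W hUW hU
end

section
/- Let G be a weighted graph with terminal set K of size k and fix a terminal v_k ∈ K. For each nonempty U ⊆ K with v_k ∉ U, fix a set A_U ⊆ V with A_U ∩ K = U and h_G(A_U) = h_K^G(U). Define an equivalence on V by u ~ v iff for every such U one has u ∈ A_U ⟺ v ∈ A_U, and let H be the quotient weighted graph obtained by contracting each equivalence class to a single vertex (capacities between distinct classes are the sums of the original capacities between them). Then H is a mimicking network for (G,K): h_K^H(U) = h_K^G(U) for every U ⊆ K. -/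
open scoped Classical

theorem wg_cutval_nonneg {κ : Type} (G : WeightedGraph κ) (A : Finset G.V) : 0 ≤ G.cutval A :=
  Finset.sum_nonneg fun _ _ => Finset.sum_nonneg fun _ _ => G.nonneg _ _

theorem wg_cutval_compl {κ : Type} (G : WeightedGraph κ) (A : Finset G.V) :
    G.cutval Aᶜ = G.cutval A := by
  unfold WeightedGraph.cutval
  rw [compl_compl, Finset.sum_comm]
  exact Finset.sum_congr rfl fun _ _ => Finset.sum_congr rfl fun _ _ => G.symm _ _

theorem wg_mem_cutSets {κ : Type} (G : WeightedGraph κ) (U : Finset κ) (A : Finset G.V) :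
    A ∈ G.cutSets U ↔ ∀ x : κ, G.ι x ∈ A ↔ x ∈ U := by
  simp [WeightedGraph.cutSets]

theorem wg_termCut_le {κ : Type} (G : WeightedGraph κ) (U : Finset κ) (A : Finset G.V)
    (h : ∀ x : κ, G.ι x ∈ A ↔ x ∈ U) : G.termCut U ≤ G.cutval A :=
  Finset.inf'_le _ ((wg_mem_cutSets G U A).2 h)

theorem wg_termCut_exists {κ : Type} (G : WeightedGraph κ) (U : Finset κ) :
    ∃ A : Finset G.V, (∀ x : κ, G.ι x ∈ A ↔ x ∈ U) ∧ G.termCut U = G.cutval A := by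
  obtain ⟨A, hA, h⟩ := Finset.exists_mem_eq_inf' (G.cutSets_nonempty U) G.cutval
  exact ⟨A, (wg_mem_cutSets G U A).1 hA, h⟩

theorem wg_cutval_quot {κ : Type} (G H : WeightedGraph κ) (f : G.V → H.V)
    (hq : WeightedGraph.IsQuotient G H f) (B : Finset H.V) :
    H.cutval B = G.cutval (Finset.univ.filter fun u => f u ∈ B) := by
  have fib : ∀ (C : Finset H.V) (g : G.V → ℝ),
      ∑ z ∈ C, ∑ v ∈ Finset.univ.filter (fun v => f v = z), g v
        = ∑ v ∈ Finset.univ.filter (fun v => f v ∈ C), g v := by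
    intro C g
    rw [← Finset.sum_fiberwise_of_maps_to (t := C) (g := f) (by simp)]
    refine Finset.sum_congr rfl fun z hz => Finset.sum_congr ?_ fun _ _ => rfl
    ext v
    simp only [Finset.mem_filter, Finset.mem_univ, true_and]
    constructor
    · rintro rfl
      exact ⟨hz, rfl⟩
    · exact fun h => h.2
  have hc : (Finset.univ.filter fun u => f u ∈ B)ᶜ = Finset.univ.filter fun u => f u ∈ Bᶜ := by
    ext v
    simp
  unfold WeightedGraph.cutval
  rw [hc, ← fib B]
  refine Finset.sum_congr rfl fun y hy => ?_
  simp_rw [← fib Bᶜ]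
  rw [Finset.sum_comm]
  refine Finset.sum_congr rfl fun z hz => ?_
  refine hq.2.2 y z ?_
  rintro rfl
  exact (Finset.mem_compl.1 hz) hy

/-- contracting the classes of the equivalence "lies on the same side of
each fixed minimum terminal cut `A_U` (for nonempty `U ⊆ K` with `v_k ∉ U`)" yields a
mimicking network for `(G, K)`. -/
theorem quotient_by_minimum_cuts_is_mimicking {κ : Type} [Fintype κ]
    (G H : WeightedGraph κ) (t : κ) (A : Finset κ → Finset G.V)
    (hA : ∀ U : Finset κ, U.Nonempty → t ∉ U →
      (∀ x : κ, G.ι x ∈ A U ↔ x ∈ U) ∧ G.cutval (A U) = G.termCut U)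
    (f : G.V → H.V) (hq : WeightedGraph.IsQuotient G H f)
    (hf : ∀ x y : G.V, f x = f y ↔
      (∀ U : Finset κ, U.Nonempty → t ∉ U → (x ∈ A U ↔ y ∈ A U))) :
    WeightedGraph.IsMimicking G H := by
  have base : ∀ U : Finset κ, t ∉ U → ∃ S : Finset G.V, (∀ x, G.ι x ∈ S ↔ x ∈ U) ∧
      (∀ x y, f x = f y → (x ∈ S ↔ y ∈ S)) ∧ G.cutval S ≤ G.termCut U := by
    intro U ht
    rcases U.eq_empty_or_nonempty with rfl | hU
    · refine ⟨∅, by simp, by simp, ?_⟩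
      obtain ⟨T, -, hT⟩ := wg_termCut_exists G ∅
      rw [hT]
      simpa [WeightedGraph.cutval] using wg_cutval_nonneg G T
    · exact ⟨A U, (hA U hU ht).1, fun x y h => (hf x y).1 h U hU ht, (hA U hU ht).2.le⟩
  have key : ∀ U : Finset κ, ∃ S : Finset G.V, (∀ x, G.ι x ∈ S ↔ x ∈ U) ∧
      (∀ x y, f x = f y → (x ∈ S ↔ y ∈ S)) ∧ G.cutval S ≤ G.termCut U := by
    intro U
    by_cases ht : t ∈ U
    · obtain ⟨S, h1, h2, h3⟩ := base Uᶜ (by simpa using ht)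
      refine ⟨Sᶜ, fun x => by simp [h1], fun x y h => by simp [h2 x y h], ?_⟩
      obtain ⟨T, hT, hT'⟩ := wg_termCut_exists G U
      rw [wg_cutval_compl, hT', ← wg_cutval_compl G T]
      exact h3.trans (wg_termCut_le G _ _ fun x => by simp [hT])
    · exact base U ht
  intro U
  apply le_antisymm
  · obtain ⟨S, h1, h2, h3⟩ := key U
    have hS : (Finset.univ.filter fun u => f u ∈ S.image f) = S := by
      ext v
      simp only [Finset.mem_filter, Finset.mem_univ, true_and, Finset.mem_image]
      constructor
      · rintro ⟨a, ha, hav⟩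
        exact (h2 a v hav).1 ha
      · exact fun h => ⟨v, h, rfl⟩
    refine le_trans (wg_termCut_le H U (S.image f) fun x => ?_) ?_
    · rw [← hq.2.1 x, ← h1 x]
      conv_rhs => rw [← hS]
      simp
    · rw [wg_cutval_quot G H f hq, hS]
      exact h3
  · obtain ⟨B, hB, hB'⟩ := wg_termCut_exists H U
    rw [hB', wg_cutval_quot G H f hq]
    exact wg_termCut_le G U _ fun x => by simp [hq.2.1, hB]
end

section
/- Let G be a weighted graph with terminal set K of size k, fix a terminal v_k ∈ K, and let 𝒰 be the collection of nonempty subsets U ⊆ K with v_k ∉ U. If X ⊆ 𝒰 contains two members P, Q with P ∩ Q = ∅, then A(X) = ∅. -/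
open scoped Classical

/-- `A` is a minimum-cardinality minimizer realizing the minimum terminal cut
`h_K^G(U)`: it induces the terminal partition `(U, K \ U)`, achieves the minimum cut
value, and has minimum cardinality among all such minimizers. -/
def WeightedGraph.IsMinCutSet {κ : Type} (G : WeightedGraph κ) (U : Finset κ)
    (A : Finset G.V) : Prop :=
  (∀ x : κ, G.ι x ∈ A ↔ x ∈ U) ∧ G.cutval A = G.termCut U ∧
    ∀ B : Finset G.V, (∀ x : κ, G.ι x ∈ B ↔ x ∈ U) → G.cutval B = G.termCut U →
      A.card ≤ B.card

/-- `𝒰`: the collection of nonempty subsets `U ⊆ K` not containing the fixed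
terminal `t` (= `v_k`). -/
noncomputable def terminalSubsets (κ : Type) [Fintype κ] (t : κ) : Finset (Finset κ) :=
  Finset.univ.filter fun U : Finset κ => U.Nonempty ∧ t ∉ U

/-- `A(X) = (∩_{Z ∈ X} S(Z)) ∩ (∩_{W ∈ 𝒰 \ X} (V \ S(W)))`, the cluster of vertices
lying inside `S(Z)` exactly for the members `Z` of the family `X ⊆ 𝒰`. -/
noncomputable def region {κ : Type} [Fintype κ] (G : WeightedGraph κ) (t : κ)
    (S : Finset κ → Finset G.V) (X : Finset (Finset κ)) : Finset G.V :=
  Finset.univ.filter fun v : G.V =>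
    (∀ Z ∈ X, v ∈ S Z) ∧ ∀ W ∈ terminalSubsets κ t \ X, v ∉ S W

theorem WeightedGraph.two_cutval {κ : Type} (G : WeightedGraph κ) (A : Finset G.V) :
    2 * G.cutval A = ∑ u, ∑ v, if (u ∈ A ↔ v ∈ A) then 0 else G.c u v := by
  have h1 : G.cutval A = ∑ u, ∑ v, if u ∈ A ∧ v ∉ A then G.c u v else 0 := by
    unfold WeightedGraph.cutval
    rw [← Finset.sum_filter_add_sum_filter_not Finset.univ (fun u => u ∈ A)
      (fun u => ∑ v, if u ∈ A ∧ v ∉ A then G.c u v else 0)]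
    rw [Finset.sum_eq_zero (s := Finset.univ.filter (fun u => ¬ u ∈ A)), add_zero]
    · rw [Finset.filter_mem_eq_inter, Finset.univ_inter]
      refine Finset.sum_congr rfl fun u hu => ?_
      rw [← Finset.sum_filter]
      refine Finset.sum_congr ?_ fun _ _ => rfl
      ext v
      simp [hu]
    · intro u hu
      have hu' : u ∉ A := by simpa using hu
      simp [hu']
  have h2 : G.cutval A = ∑ u, ∑ v, if v ∈ A ∧ u ∉ A then G.c u v else 0 := by
    rw [h1, Finset.sum_comm]
    refine Finset.sum_congr rfl fun u _ => Finset.sum_congr rfl fun v _ => ?_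
    rw [G.symm]
  rw [two_mul]
  nth_rewrite 1 [h1]
  rw [h2, ← Finset.sum_add_distrib]
  refine Finset.sum_congr rfl fun u _ => ?_
  rw [← Finset.sum_add_distrib]
  refine Finset.sum_congr rfl fun v _ => ?_
  by_cases hu : u ∈ A <;> by_cases hv : v ∈ A <;> simp [hu, hv]

theorem WeightedGraph.cutval_posimodular {κ : Type} (G : WeightedGraph κ)
    (A B : Finset G.V) :
    G.cutval (A \ B) + G.cutval (B \ A) ≤ G.cutval A + G.cutval B := by
  have h : 2 * G.cutval (A \ B) + 2 * G.cutval (B \ A) ≤ 2 * G.cutval A + 2 * G.cutval B := by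
    simp only [WeightedGraph.two_cutval, ← Finset.sum_add_distrib]
    refine Finset.sum_le_sum fun u _ => Finset.sum_le_sum fun v _ => ?_
    have := G.nonneg u v
    by_cases h1 : u ∈ A <;> by_cases h2 : v ∈ A <;> by_cases h3 : u ∈ B <;>
      by_cases h4 : v ∈ B <;> simp [h1, h2, h3, h4, this]
  linarith

theorem WeightedGraph.termCut_le {κ : Type} (G : WeightedGraph κ) (U : Finset κ)
    (A : Finset G.V) (hA : ∀ x : κ, G.ι x ∈ A ↔ x ∈ U) : G.termCut U ≤ G.cutval A :=
  Finset.inf'_le _ (by simpa [WeightedGraph.cutSets] using hA)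

/-- if the family `X ⊆ 𝒰` contains two disjoint members then `A(X) = ∅`. -/
theorem region_empty_of_disjoint_members {κ : Type} [Fintype κ] (G : WeightedGraph κ)
    (t : κ) (S : Finset κ → Finset G.V)
    (hS : ∀ U ∈ terminalSubsets κ t, G.IsMinCutSet U (S U))
    (X : Finset (Finset κ)) (hX : X ⊆ terminalSubsets κ t)
    (P Q : Finset κ) (hP : P ∈ X) (hQ : Q ∈ X) (hPQ : P ∩ Q = ∅) :
    region G t S X = ∅ := by
  obtain ⟨p1, p2, p3⟩ := hS P (hX hP)
  obtain ⟨q1, q2, q3⟩ := hS Q (hX hQ)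
  have hd : ∀ x, x ∈ P → x ∉ Q := fun x hx hx' => by
    have : x ∈ P ∩ Q := Finset.mem_inter.2 ⟨hx, hx'⟩
    simp [hPQ] at this
  have a1 : ∀ x : κ, G.ι x ∈ S P \ S Q ↔ x ∈ P := fun x => by
    rw [Finset.mem_sdiff, p1, q1]
    exact ⟨fun h => h.1, fun h => ⟨h, hd x h⟩⟩
  have b1 : ∀ x : κ, G.ι x ∈ S Q \ S P ↔ x ∈ Q := fun x => by
    rw [Finset.mem_sdiff, p1, q1]
    exact ⟨fun h => h.1, fun h => ⟨h, fun h' => hd x h' h⟩⟩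
  have hm := G.cutval_posimodular (S P) (S Q)
  have ha := G.termCut_le P _ a1
  have hb := G.termCut_le Q _ b1
  have hc := p3 _ a1 (by linarith)
  have he : S P \ S Q = S P := Finset.eq_of_subset_of_card_le Finset.sdiff_subset hc
  refine Finset.eq_empty_of_forall_notMem fun v hv => ?_
  have hv' := (Finset.mem_filter.1 hv).2.1
  have h1 := hv' P hP
  rw [← he] at h1
  exact (Finset.mem_sdiff.1 h1).2 (hv' Q hQ)
end

section
/- Let G be a weighted graph with terminal set K such that for every U ⊆ K the minimum terminal cut is unique, i.e. there is exactly one A ⊆ V with A ∩ K = U and h_G(A) = h_K^G(U). Let H be the contraction-based mimicking network obtained by contracting each class of the equivalence u ~ v ⟺ (u and v lie on the same side of every minimum terminal cut of G). Then H has the minimum number of vertices among all contraction-based mimicking networks for (G,K). -/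
open scoped Classical

theorem cutval_preimage {κ : Type} (G H : WeightedGraph κ) (f : G.V → H.V)
    (hq : WeightedGraph.IsQuotient G H f) (B : Finset H.V) :
    G.cutval (Finset.univ.filter fun u => f u ∈ B) = H.cutval B := by
  obtain ⟨_, _, hc⟩ := hq
  unfold WeightedGraph.cutval
  have h1 : ∀ y ∈ B, ∑ z ∈ Bᶜ, H.c y z = ∑ z ∈ Bᶜ,
      ∑ u ∈ Finset.univ.filter (fun u => f u = y),
        ∑ v ∈ Finset.univ.filter (fun v => f v = z), G.c u v := by
    intro y hy
    refine Finset.sum_congr rfl fun z hz => hc y z ?_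
    rintro rfl
    exact (Finset.mem_compl.mp hz) hy
  rw [Finset.sum_congr rfl h1]
  have h2 : (Finset.univ.filter fun u => f u ∈ B)ᶜ =
      Finset.univ.filter fun u => f u ∈ Bᶜ := by
    ext u; simp
  rw [h2]
  have key : ∀ (C : Finset H.V) (g : G.V → ℝ),
      ∑ u ∈ Finset.univ.filter (fun u => f u ∈ C), g u =
        ∑ y ∈ C, ∑ u ∈ Finset.univ.filter (fun u => f u = y), g u := by
    intro C g
    rw [← Finset.sum_fiberwise_of_maps_to (t := C) (g := f) (by simp)]
    refine Finset.sum_congr rfl fun y hy => Finset.sum_congr ?_ fun _ _ => rfl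
    ext u
    simp only [Finset.mem_filter, Finset.mem_univ, true_and]
    exact ⟨fun h => h.2, fun h => ⟨h ▸ hy, h⟩⟩
  rw [key B]
  refine Finset.sum_congr rfl fun y _ => ?_
  rw [Finset.sum_comm]
  rw [key Bᶜ]
  exact Finset.sum_congr rfl fun z _ => Finset.sum_comm

/-- if `G` has unique minimum terminal cuts, then the contraction-based
network `H` obtained by contracting the classes of the equivalence "`x` and `y` lie on
the same side of every minimum terminal cut of `G`" has the minimum number of vertices
among all contraction-based mimicking networks for `(G, K)`. -/
theorem contraction_mimicking_optimal {κ : Type} (G H : WeightedGraph κ)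
    (huniq : ∀ U : Finset κ, ∃! A : Finset G.V,
      (∀ x : κ, G.ι x ∈ A ↔ x ∈ U) ∧ G.cutval A = G.termCut U)
    (f : G.V → H.V) (hq : WeightedGraph.IsQuotient G H f)
    (hf : ∀ x y : G.V, f x = f y ↔
      ∀ (U : Finset κ) (A : Finset G.V),
        (∀ z : κ, G.ι z ∈ A ↔ z ∈ U) → G.cutval A = G.termCut U → (x ∈ A ↔ y ∈ A))
    (H' : WeightedGraph κ) (f' : G.V → H'.V)
    (hq' : WeightedGraph.IsQuotient G H' f')
    (hm' : WeightedGraph.IsMimicking G H') :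
    Fintype.card H.V ≤ Fintype.card H'.V := by
  have hfac : ∀ x y : G.V, f' x = f' y → f x = f y := by
    intro x y hxy
    rw [hf]
    intro U A hA hcut
    obtain ⟨B, hB, hBv⟩ := Finset.exists_mem_eq_inf' (H'.cutSets_nonempty U) H'.cutval
    have hBU : ∀ z : κ, H'.ι z ∈ B ↔ z ∈ U := by
      simpa [WeightedGraph.cutSets] using hB
    have hEq : A = Finset.univ.filter fun u => f' u ∈ B := by
      refine (huniq U).unique ⟨hA, hcut⟩ ⟨?_, ?_⟩
      · intro z
        simp [hq'.2.1 z, hBU z]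
      · rw [cutval_preimage G H' f' hq' B, ← hm' U]
        exact hBv.symm
    rw [hEq]
    simp [hxy]
  have hs : Function.Surjective (fun w : H'.V => f (Function.surjInv hq'.1 w)) := by
    intro w
    obtain ⟨x, rfl⟩ := hq.1 w
    exact ⟨f' x, hfac _ _ (Function.surjInv_eq hq'.1 (f' x))⟩
  exact Fintype.card_le_of_surjective _ hs
end

section
/- Let G be a weighted graph with terminal set K such that for every U ⊆ K the minimum terminal cut is unique, i.e. there is exactly one A_U ⊆ V with A_U ∩ K = U and h_G(A_U) = h_K^G(U). Let H' be any contraction-based mimicking network of (G,K) given by a surjection f' : V → V_{H'}. Then for every edge (y,z) of G with positive capacity that crosses some minimum terminal cut (i.e. y ∈ A_U and z ∉ A_U for some U ⊆ K), one has f'(y) ≠ f'(z). -/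
open scoped Classical

/-- if `G` has unique minimum terminal cuts and `H'` is any
contraction-based mimicking network of `(G,K)` given by `f'`, then the endpoints of any
positive-capacity edge crossing some minimum terminal cut are not identified by `f'`. -/
theorem crossing_edge_not_contracted {κ : Type} (G : WeightedGraph κ)
    (huniq : ∀ U : Finset κ, ∃! A : Finset G.V,
      (∀ x : κ, G.ι x ∈ A ↔ x ∈ U) ∧ G.cutval A = G.termCut U)
    (H' : WeightedGraph κ) (f' : G.V → H'.V)
    (hq' : WeightedGraph.IsQuotient G H' f')
    (hm' : WeightedGraph.IsMimicking G H')
    (y z : G.V) (hc : 0 < G.c y z)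
    (hcross : ∃ (U : Finset κ) (A : Finset G.V),
      (∀ x : κ, G.ι x ∈ A ↔ x ∈ U) ∧ G.cutval A = G.termCut U ∧ y ∈ A ∧ z ∉ A) :
    f' y ≠ f' z := by
  obtain ⟨U, A, hA, hAc, hy, hz⟩ := hcross
  obtain ⟨-, hι, hcap⟩ := hq'
  obtain ⟨B, hB, hBc⟩ := Finset.exists_mem_eq_inf' (H'.cutSets_nonempty U) H'.cutval
  have hB' : ∀ x : κ, H'.ι x ∈ B ↔ x ∈ U := by
    simpa [WeightedGraph.cutSets] using hB
  have hval : G.cutval (Finset.univ.filter fun u => f' u ∈ B) = H'.cutval B := by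
    unfold WeightedGraph.cutval
    rw [← Finset.sum_fiberwise_of_maps_to (t := B) (g := f') (by simp)]
    refine Finset.sum_congr rfl fun b hb => ?_
    have h1 : (Finset.univ.filter fun u => f' u ∈ B).filter (fun u => f' u = b)
        = Finset.univ.filter (fun u => f' u = b) := by
      ext u
      simp only [Finset.mem_filter, Finset.mem_univ, true_and]
      exact ⟨fun h => h.2, fun h => ⟨h ▸ hb, h⟩⟩
    rw [h1]
    have h2 : ∀ b' ∈ Bᶜ, H'.c b b' = ∑ u ∈ Finset.univ.filter (fun u => f' u = b),
        ∑ v ∈ Finset.univ.filter (fun v => f' v = b'), G.c u v := by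
      intro b' hb'
      refine hcap b b' ?_
      rintro rfl
      exact (Finset.mem_compl.mp hb') hb
    rw [Finset.sum_congr rfl h2]
    refine Eq.trans ?_ Finset.sum_comm
    refine Finset.sum_congr rfl fun u _ => ?_
    rw [← Finset.sum_fiberwise_of_maps_to (t := Bᶜ) (g := f') (f := fun v => G.c u v)
      (s := (Finset.univ.filter fun u => f' u ∈ B)ᶜ) (by simp)]
    refine Finset.sum_congr rfl fun b' hb' => ?_
    refine Finset.sum_congr ?_ fun _ _ => rfl
    ext v
    simp only [Finset.mem_filter, Finset.mem_univ, true_and, Finset.mem_compl]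
    exact ⟨fun h => h.2, fun h => ⟨h ▸ (Finset.mem_compl.mp hb'), h⟩⟩
  have hEq : A = Finset.univ.filter fun u => f' u ∈ B := by
    refine (huniq U).unique ⟨hA, hAc⟩ ⟨fun x => ?_, ?_⟩
    · simp [hι, hB']
    · rw [hval, ← hm' U]
      exact hBc.symm
  intro hf
  rw [hEq] at hy hz
  simp only [Finset.mem_filter, Finset.mem_univ, true_and] at hy hz
  exact hz (hf ▸ hy)
end

section
/- Fix a finite terminal set K of size k ≥ 2, a terminal v_k ∈ K, and a nonempty subset U ⊆ K with v_k ∉ U. Then there exist two weighted graphs G_1 and G_2 with terminal set K whose minimum terminal cut vectors differ only in the coordinate indexed by U: h_K^{G_1}(U) ≠ h_K^{G_2}(U), while h_K^{G_1}(W) = h_K^{G_2}(W) for every nonempty W ⊆ K with v_k ∉ W and W ≠ U. -/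
open scoped Classical

namespace MTCV

open WeightedGraph

/-- Terminals plus two extra vertices: `inr true` is joined to each `x` with capacity `a x`,
`inr false` with capacity `b x`, and the two extra vertices are joined with capacity `e`. -/
noncomputable def gad {κ : Type} [Fintype κ] (a b : κ → ℝ) (e : ℝ) (ha : ∀ x, 0 ≤ a x)
    (hb : ∀ x, 0 ≤ b x) (he : 0 ≤ e) : WeightedGraph κ where
  V := κ ⊕ Bool
  ι := ⟨Sum.inl, Sum.inl_injective⟩
  c := fun u v => match u, v with
    | Sum.inl _, Sum.inl _ => 0
    | Sum.inl x, Sum.inr true => a x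
    | Sum.inl x, Sum.inr false => b x
    | Sum.inr true, Sum.inl x => a x
    | Sum.inr false, Sum.inl x => b x
    | Sum.inr _, Sum.inr _ => e
  symm := by rintro (x | (_ | _)) (y | (_ | _)) <;> rfl
  nonneg := by rintro (x | (_ | _)) (y | (_ | _)) <;> simp [ha, hb, he]

/-- The cut value formula. -/
noncomputable def val {κ : Type} [Fintype κ] (a b : κ → ℝ) (e : ℝ) (W : Finset κ)
    (s r : Prop) : ℝ :=
  (if s then ∑ x ∈ Wᶜ, a x else ∑ x ∈ W, a x) + (if r then ∑ x ∈ Wᶜ, b x else ∑ x ∈ W, b x)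
    + (if (s ↔ r) then 0 else e)

theorem mem_cutSets_iff {κ : Type} (G : WeightedGraph κ) (W : Finset κ) (A : Finset G.V) :
    A ∈ G.cutSets W ↔ ∀ x : κ, G.ι x ∈ A ↔ x ∈ W := by
  simp [cutSets]

theorem cutval_eq {κ : Type} (G : WeightedGraph κ) (A : Finset G.V) :
    G.cutval A = ∑ u, ∑ v, if u ∈ A then (if v ∈ A then 0 else G.c u v) else 0 := by
  unfold cutval
  rw [← Finset.sum_subset (Finset.subset_univ A)]
  · refine Finset.sum_congr rfl fun u hu => ?_
    rw [← Finset.sum_subset (Finset.subset_univ Aᶜ)]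
    · refine Finset.sum_congr rfl fun v hv => ?_
      have : v ∉ A := by simpa using hv
      simp [this, hu]
    · intro v _ hv
      have : v ∈ A := by simpa using hv
      simp [this]
  · intro u _ hu
    simp [hu]

theorem cutval_gad {κ : Type} [Fintype κ] (a b : κ → ℝ) (e : ℝ) (ha : ∀ x, 0 ≤ a x)
    (hb : ∀ x, 0 ≤ b x) (he : 0 ≤ e) (W : Finset κ) (A : Finset (κ ⊕ Bool))
    (hA : ∀ x, Sum.inl x ∈ A ↔ x ∈ W) :
    (gad a b e ha hb he).cutval A = val a b e W (Sum.inr true ∈ A) (Sum.inr false ∈ A) := by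
  have h1 : (gad a b e ha hb he).cutval A
      = ∑ u : κ ⊕ Bool, ∑ v : κ ⊕ Bool,
        if u ∈ A then (if v ∈ A then 0 else (gad a b e ha hb he).c u v) else 0 := by
    refine (cutval_eq (gad a b e ha hb he) A).trans ?_
    refine Finset.sum_congr rfl fun u _ => Finset.sum_congr rfl fun v _ => ?_
    congr
  have key : ∀ f : κ → ℝ, ∑ x ∈ W, f x = ∑ x, if x ∈ W then f x else 0 := by
    intro f; simp [Finset.sum_ite_mem]
  have key2 : ∀ f : κ → ℝ, ∑ x ∈ Wᶜ, f x = ∑ x, if x ∈ W then 0 else f x := by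
    intro f
    rw [Finset.sum_ite]
    simp only [Finset.sum_const_zero, zero_add]
    refine Finset.sum_congr ?_ fun _ _ => rfl
    ext; simp
  rw [h1]
  unfold val
  rw [key, key, key2, key2]
  simp only [Fintype.sum_sum_type, Fintype.sum_bool, gad, hA]
  by_cases s : Sum.inr true ∈ A <;> by_cases r : Sum.inr false ∈ A <;>
    simp [s, r, Finset.sum_add_distrib] <;> ring

theorem le_termCut {κ : Type} [Fintype κ] (a b : κ → ℝ) (e : ℝ) (ha : ∀ x, 0 ≤ a x)
    (hb : ∀ x, 0 ≤ b x) (he : 0 ≤ e) (W : Finset κ) (z : ℝ)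
    (h : ∀ s r : Prop, z ≤ val a b e W s r) : z ≤ (gad a b e ha hb he).termCut W := by
  unfold termCut
  refine Finset.le_inf' _ _ fun A hA => ?_
  rw [cutval_gad a b e ha hb he W A]
  · exact h _ _
  · unfold cutSets at hA
    simp only [Finset.mem_filter, Finset.mem_univ, true_and] at hA
    exact hA

theorem termCut_le {κ : Type} [Fintype κ] (a b : κ → ℝ) (e : ℝ) (ha : ∀ x, 0 ≤ a x)
    (hb : ∀ x, 0 ≤ b x) (he : 0 ≤ e) (W : Finset κ) (s r : Prop) :
    (gad a b e ha hb he).termCut W ≤ val a b e W s r := by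
  let A : Finset (κ ⊕ Bool) := Finset.univ.filter fun v =>
    match v with
    | Sum.inl x => x ∈ W
    | Sum.inr true => s
    | Sum.inr false => r
  have hA : ∀ x, Sum.inl x ∈ A ↔ x ∈ W := by intro x; simp [A]
  have h := cutval_gad a b e ha hb he W A hA
  have hs : (Sum.inr true ∈ A) = s := by simp [A]
  have hr : (Sum.inr false ∈ A) = r := by simp [A]
  rw [hs, hr] at h
  rw [← h]
  unfold termCut
  refine Finset.inf'_le _ ?_
  exact (mem_cutSets_iff (gad a b e ha hb he) W A).2 hA

theorem termCut_le_termCut {κ : Type} [Fintype κ] (a b : κ → ℝ) (e e' : ℝ) (ha : ∀ x, 0 ≤ a x)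
    (hb : ∀ x, 0 ≤ b x) (he : 0 ≤ e) (he' : 0 ≤ e') (W : Finset κ)
    (h1 : val a b e' W False False ≤ val a b e' W True False ∨
      val a b e' W True True ≤ val a b e' W True False)
    (h2 : val a b e' W False False ≤ val a b e' W False True) :
    (gad a b e ha hb he).termCut W ≤ (gad a b e' ha hb he').termCut W := by
  have t1 := termCut_le a b e ha hb he W True True
  have t2 := termCut_le a b e ha hb he W False False
  have e1 : val a b e W True True = val a b e' W True True := by simp [val]
  have e2 : val a b e W False False = val a b e' W False False := by simp [val]
  apply le_termCut
  intro s r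
  by_cases hs : s <;> by_cases hr : r <;> simp only [hs, hr]
  · linarith
  · rcases h1 with h | h <;> linarith
  · linarith
  · linarith

end MTCV

open MTCV in
/-- for any fixed terminal `t = v_k` and nonempty `U ⊆ K` with `t ∉ U`,
there are two weighted graphs whose minimum terminal cut vectors differ exactly in the
coordinate indexed by `U`. -/
theorem mtcv_vary_single_coordinate (κ : Type) [Fintype κ] (t : κ)
    (hk : 2 ≤ Fintype.card κ) (U : Finset κ) (hU : U.Nonempty) (htU : t ∉ U) :
    ∃ G₁ G₂ : WeightedGraph κ,
      G₁.termCut U ≠ G₂.termCut U ∧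
      ∀ W : Finset κ, W.Nonempty → t ∉ W → W ≠ U →
        G₁.termCut W = G₂.termCut W := by
  obtain ⟨m, hm⟩ : ∃ m : ℝ, m = (U.card : ℝ) := ⟨_, rfl⟩
  obtain ⟨n, hn⟩ : ∃ n : ℝ, n = (Uᶜ.card : ℝ) := ⟨_, rfl⟩
  have hm1 : 1 ≤ m := by rw [hm]; exact_mod_cast hU.card_pos
  have hn1 : 1 ≤ n := by
    rw [hn]; exact_mod_cast Finset.card_pos.2 ⟨t, by simpa using htU⟩
  have hmn : 1 ≤ m * n := by nlinarith
  obtain ⟨a, haa⟩ : ∃ a : κ → ℝ, a = fun x => if x ∈ U then n else 0 := ⟨_, rfl⟩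
  obtain ⟨b, hbb⟩ : ∃ b : κ → ℝ, b = fun x => if x ∈ U then 0 else m := ⟨_, rfl⟩
  have ha : ∀ x, 0 ≤ a x := by intro x; rw [haa]; dsimp only; split_ifs <;> linarith
  have hb : ∀ x, 0 ≤ b x := by intro x; rw [hbb]; dsimp only; split_ifs <;> linarith
  have sa : ∀ W : Finset κ, ∑ x ∈ W, a x = n * ((W ∩ U).card : ℝ) := by
    intro W
    simp [haa, Finset.sum_ite_mem, mul_comm]
  have sb : ∀ W : Finset κ, ∑ x ∈ W, b x = m * ((W \ U).card : ℝ) := by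
    intro W
    have : W.filter (fun x => x ∉ U) = W \ U := by ext; simp
    simp [hbb, Finset.sum_ite, this, mul_comm]
  have sac : ∀ W : Finset κ, ∑ x ∈ Wᶜ, a x = n * (m - ((W ∩ U).card : ℝ)) := by
    intro W
    have h := Finset.sum_add_sum_compl W a
    have h' := sa Finset.univ
    simp only [Finset.univ_inter, ← hm] at h'
    rw [sa, h'] at h
    linarith
  have sbc : ∀ W : Finset κ, ∑ x ∈ Wᶜ, b x = m * (n - ((W \ U).card : ℝ)) := by
    intro W
    have h := Finset.sum_add_sum_compl W b
    have h' := sb Finset.univ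
    rw [← Finset.compl_eq_univ_sdiff, ← hn] at h'
    rw [sb, h'] at h
    linarith
  have hv : ∀ (e : ℝ) (W : Finset κ) (s r : Prop), val a b e W s r =
      (if s then n * (m - ((W ∩ U).card : ℝ)) else n * ((W ∩ U).card : ℝ)) +
      (if r then m * (n - ((W \ U).card : ℝ)) else m * ((W \ U).card : ℝ)) +
      (if (s ↔ r) then 0 else e) := by
    intro e W s r
    rw [val, sac, sbc, sa, sb]
  have he1 : 0 ≤ m * n := by linarith
  have he2 : 0 ≤ m * n - 1 := by linarith
  refine ⟨gad a b (m * n) ha hb he1, gad a b (m * n - 1) ha hb he2, ?_, ?_⟩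
  · have h2 := termCut_le a b _ ha hb he2 U True False
    have h1 : m * n ≤ (gad a b (m * n) ha hb he1).termCut U := by
      apply le_termCut
      intro s r
      by_cases hs : s <;> by_cases hr : r <;>
        simp [hs, hr, hv, ← hm] <;> nlinarith
    simp [hv, ← hm] at h2
    intro h
    linarith
  · intro W _ htW hWU
    have hq : ((W \ U).card : ℝ) + 1 ≤ n := by
      rw [hn]
      have : W \ U ⊂ Uᶜ := by
        refine Finset.ssubset_iff_subset_ne.2 ⟨fun x hx => by simp at hx ⊢; exact hx.2, ?_⟩
        intro h
        have : t ∈ W \ U := by rw [h]; simpa using htU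
        exact htW (Finset.mem_sdiff.1 this).1
      exact_mod_cast Finset.card_lt_card this
    have hpq : ((W ∩ U).card : ℝ) + 1 ≤ m ∨ 1 ≤ ((W \ U).card : ℝ) := by
      by_cases hs : U ⊆ W
      · right
        have : (W \ U).Nonempty := by
          rw [Finset.sdiff_nonempty]
          exact fun h => hWU (Finset.Subset.antisymm h hs)
        exact_mod_cast this.card_pos
      · left
        rw [hm]
        have : W ∩ U ⊂ U := by
          refine Finset.ssubset_iff_subset_ne.2 ⟨Finset.inter_subset_right, fun h => hs ?_⟩
          exact Finset.inter_eq_right.1 h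
        exact_mod_cast Finset.card_lt_card this
    have H1 : ∀ e, m * n - 1 ≤ e → val a b e W False False ≤ val a b e W True False ∨
      val a b e W True True ≤ val a b e W True False := by
      intro e he
      rcases hpq with h | h
      · left
        simp [hv]
        nlinarith
      · right
        simp [hv]
        nlinarith
    have H2 : ∀ e, m * n - 1 ≤ e → val a b e W False False ≤ val a b e W False True := by
      intro e he
      simp [hv]
      nlinarith
    exact le_antisymm
      (termCut_le_termCut a b _ _ ha hb _ _ W (H1 _ le_rfl) (H2 _ le_rfl))
      (termCut_le_termCut a b _ _ ha hb _ _ W (H1 _ (by linarith)) (H2 _ (by linarith)))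
end

section
/- For every k ≥ 2 there exists a weighted graph G with a terminal set K of size k such that every mimicking network for (G,K) has at least 2^{(k−1)/2} vertices. -/
open scoped Classical

namespace MimickLB

open WeightedGraph

variable {m : ℕ}

/-- positive rationally independent reals -/
theorem exists_indep (ι : Type) [Fintype ι] :
    ∃ w : ι → ℝ, LinearIndependent ℚ w ∧ ∀ i, 0 < w i := by
  let B := Module.Basis.ofVectorSpace ℚ ℝ
  have hinf : Infinite (Module.Basis.ofVectorSpaceIndex ℚ ℝ) := by
    rw [Cardinal.infinite_iff, B.mk_eq_rank'', Real.rank_rat_real]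
    exact Cardinal.aleph0_le_continuum
  obtain ⟨e⟩ : Nonempty (ι ↪ Module.Basis.ofVectorSpaceIndex ℚ ℝ) := by
    have : Nonempty (ℕ ↪ Module.Basis.ofVectorSpaceIndex ℚ ℝ) := ⟨Infinite.natEmbedding _⟩
    obtain ⟨f⟩ := this
    exact ⟨((Fintype.equivFin ι).toEmbedding.trans Fin.valEmbedding).trans f⟩
  have hv : LinearIndependent ℚ (fun i => B (e i)) := B.linearIndependent.comp e e.injective
  have hne : ∀ i, B (e i) ≠ 0 := fun i => hv.ne_zero i
  refine ⟨fun i => |B (e i)|, ?_, fun i => abs_pos.2 (hne i)⟩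
  have := hv.units_smul (fun i => if 0 < B (e i) then (1 : ℚˣ) else -1)
  convert this using 1
  funext i
  by_cases h : 0 < B (e i)
  · simp [h, abs_of_pos h]
  · simp [h, abs_of_nonpos (not_lt.1 h)]

/-- terminal-hub capacities -/
noncomputable def hub (w : Finset (Fin m) → ℝ) (S : Finset (Fin m)) : Fin (m + 1) → ℝ :=
  Fin.cons (w S * ((S.card - 1 : ℕ) : ℝ)) (fun i => if i ∈ S then w S else 0)

/-- terminal-terminal capacities (one direction) -/
noncomputable def dir (d : Fin m → ℝ) : Fin (m + 1) → Fin (m + 1) → ℝ :=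
  Fin.cons (Fin.cons 0 d) (fun i => Fin.cons (d i) (fun _ => 0))

noncomputable def cap (w : Finset (Fin m) → ℝ) (d : Fin m → ℝ) :
    Fin (m + 1) ⊕ Finset (Fin m) → Fin (m + 1) ⊕ Finset (Fin m) → ℝ
  | .inl i, .inl j => dir d i j
  | .inl i, .inr S => hub w S i
  | .inr S, .inl i => hub w S i
  | .inr _, .inr _ => 0

theorem hub_nonneg (w : Finset (Fin m) → ℝ) (hw : ∀ S, 0 < w S) (S) (i) : 0 ≤ hub w S i := by
  refine Fin.cases ?_ (fun i => ?_) i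
  · have := (hw S).le
    simp only [hub, Fin.cons_zero]; positivity
  · simp only [hub, Fin.cons_succ]; split_ifs; exacts [(hw S).le, le_rfl]

noncomputable def Gr (w : Finset (Fin m) → ℝ) (hw : ∀ S, 0 < w S) (d : Fin m → ℝ)
    (hd : ∀ i, 0 ≤ d i) : WeightedGraph (Fin (m + 1)) where
  V := Fin (m + 1) ⊕ Finset (Fin m)
  ι := Function.Embedding.inl
  c := cap w d
  symm := by
    rintro (i | S) (j | T)
    · refine Fin.cases ?_ (fun i => ?_) i <;> refine Fin.cases ?_ (fun j => ?_) j <;>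
        simp [cap, dir]
    all_goals rfl
  nonneg := by
    rintro (i | S) (j | T)
    · refine Fin.cases ?_ (fun i => ?_) i <;> refine Fin.cases ?_ (fun j => ?_) j <;>
        simp [cap, dir, hd]
    · exact hub_nonneg w hw _ _
    · exact hub_nonneg w hw _ _
    · exact le_rfl

theorem cutval_eq (G : WeightedGraph (Fin (m + 1))) (A : Finset G.V) :
    G.cutval A = ∑ u, ∑ v, if u ∈ A ∧ v ∉ A then G.c u v else 0 := by
  unfold cutval
  rw [← Finset.sum_filter_add_sum_filter_not Finset.univ (· ∈ A)]
  have h2 : ∑ u ∈ Finset.univ.filter (fun u => ¬ u ∈ A),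
      ∑ v, (if u ∈ A ∧ v ∉ A then G.c u v else 0) = 0 := by
    apply Finset.sum_eq_zero
    intro u hu
    simp at hu
    simp [hu]
  rw [h2, add_zero]
  apply Finset.sum_congr (by ext; simp)
  intro u hu
  have hu' : u ∈ A := by simpa using hu
  simp only [hu', true_and]
  rw [← Finset.sum_filter]
  apply Finset.sum_congr (by ext; simp) (fun _ _ => rfl)

theorem ite_aux {p q : Prop} {i : Decidable p} {j : Decidable q} (h : p ↔ q)
    {a b c d : ℝ} (h1 : a = c) (h2 : b = d) :
    (if p then a else b) = if q then c else d := by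
  subst h1 h2
  exact if_congr h rfl rfl

/-- vertices of `Gr` -/
def toV (w : Finset (Fin m) → ℝ) (hw : ∀ S, 0 < w S) (d : Fin m → ℝ)
    (hd : ∀ i, 0 ≤ d i) (x : Fin (m + 1) ⊕ Finset (Fin m)) : (Gr w hw d hd).V := x

theorem cut_calc (w : Finset (Fin m) → ℝ) (d : Fin m → ℝ) (U : Finset (Fin m))
    (p : Fin (m + 1) ⊕ Finset (Fin m) → Prop) (h0 : ¬ p (Sum.inl 0))
    (hs : ∀ i : Fin m, p (Sum.inl i.succ) ↔ i ∈ U) :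
    (∑ u, ∑ v, if p u ∧ ¬ p v then cap w d u v else 0) = (∑ i ∈ U, d i) +
      ∑ S : Finset (Fin m), w S * (if p (Sum.inr S) then
        ((S.card - 1 : ℕ) : ℝ) + ((S \ U).card : ℝ) else ((S ∩ U).card : ℝ)) := by
  have e1 : ∀ S : Finset (Fin m), ∑ i, (if i ∈ U then (if i ∈ S then w S else 0) else 0)
      = w S * ((S ∩ U).card : ℝ) := by
    intro S
    simp only [← ite_and]
    rw [← Finset.sum_filter, Finset.sum_const, nsmul_eq_mul, mul_comm]
    congr 3
    ext; simp [and_comm]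
  have e2 : ∀ S : Finset (Fin m), ∑ i, (if i ∉ U then (if i ∈ S then w S else 0) else 0)
      = w S * ((S \ U).card : ℝ) := by
    intro S
    simp only [← ite_and]
    rw [← Finset.sum_filter, Finset.sum_const, nsmul_eq_mul, mul_comm]
    congr 3
    ext; simp [and_comm]
  have key : ∀ S : Finset (Fin m), 
      w S * (if p (Sum.inr S) then
        ((S.card - 1 : ℕ) : ℝ) + ((S \ U).card : ℝ) else ((S ∩ U).card : ℝ)) =
      (∑ i : Fin m, if i ∈ U ∧ ¬ p (Sum.inr S) then
        (if i ∈ S then w S else 0) else 0) +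
      ((if p (Sum.inr S) then
        w S * ((S.card - 1 : ℕ) : ℝ) else 0) + 
       ∑ i : Fin m, if p (Sum.inr S) ∧ i ∉ U then
        (if i ∈ S then w S else 0) else 0) := by
    intro S
    by_cases hS : p (Sum.inr S)
    · simp only [hS, if_true, true_and, not_true, and_false, if_false, e2,
        Finset.sum_const_zero]
      ring
    · simp only [hS, if_false, false_and, not_false_iff, and_true, e1, 
        Finset.sum_const_zero]
      ring
  simp only [key, Finset.sum_add_distrib]
  simp only [Fintype.sum_sum_type, Fin.sum_univ_succ, cap, hub, dir, h0, hs, Fin.cons_zero,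
    Fin.cons_succ, false_and, if_false, not_false_iff, and_true, ite_self, 
    Finset.sum_const_zero, add_zero, zero_add, Finset.sum_add_distrib]
  have e3 : ∑ i ∈ U, d i = ∑ i, if i ∈ U then d i else 0 := by
    rw [← Finset.sum_filter]; simp
  rw [e3, add_assoc]
  have e4 : (∑ x : Fin m, ∑ S : Finset (Fin m), if x ∈ U ∧ ¬ p (Sum.inr S) then
      (if x ∈ S then w S else 0) else 0) = ∑ S : Finset (Fin m), ∑ x : Fin m,
      if x ∈ U ∧ ¬ p (Sum.inr S) then (if x ∈ S then w S else 0) else 0 := Finset.sum_comm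
  rw [e4]
  ring

theorem cutval_Gr (w : Finset (Fin m) → ℝ) (hw : ∀ S, 0 < w S) (d : Fin m → ℝ)
    (hd : ∀ i, 0 ≤ d i) (U : Finset (Fin m)) (A : Finset (Gr w hw d hd).V)
    (hA : A ∈ (Gr w hw d hd).cutSets (U.map (Fin.succEmb m))) :
    (Gr w hw d hd).cutval A = (∑ i ∈ U, d i) +
      ∑ S : Finset (Fin m), w S * (if toV w hw d hd (Sum.inr S) ∈ A then
        ((S.card - 1 : ℕ) : ℝ) + ((S \ U).card : ℝ) else ((S ∩ U).card : ℝ)) := by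
  simp only [cutSets, Finset.mem_filter, Finset.mem_univ, true_and] at hA
  have h := cut_calc w d U (fun x => toV w hw d hd x ∈ A)
    (by
      intro h
      have := (hA 0).1 h
      simp at this)
    (by
      intro i
      refine (hA i.succ).trans ?_
      simp)
  refine (cutval_eq _ A).trans (Eq.trans ?_ (h.trans ?_))
  · refine Finset.sum_congr rfl fun u _ => Finset.sum_congr rfl fun v _ => ?_
    exact ite_aux Iff.rfl rfl rfl
  · congr 1
    refine Finset.sum_congr rfl fun S _ => ?_
    congr 1
    exact ite_aux Iff.rfl rfl rfl

theorem termCut_Gr (w : Finset (Fin m) → ℝ) (hw : ∀ S, 0 < w S) (d : Fin m → ℝ)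
    (hd : ∀ i, 0 ≤ d i) (U : Finset (Fin m)) :
    (Gr w hw d hd).termCut (U.map (Fin.succEmb m)) = (∑ i ∈ U, d i) +
      ∑ S : Finset (Fin m), w S * (((S ∩ U).card : ℝ) - 
        if S ⊆ U ∧ S.Nonempty then 1 else 0) := by
  unfold termCut
  apply le_antisymm
  · let A0 : Finset (Fin (m+1) ⊕ Finset (Fin m)) :=
      (U.map (Fin.succEmb m)).disjSum (Finset.univ.filter fun S => S ⊆ U ∧ S.Nonempty)
    let A : Finset (Gr w hw d hd).V := A0
    have hA : A ∈ (Gr w hw d hd).cutSets (U.map (Fin.succEmb m)) := by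
      simp only [cutSets, Finset.mem_filter, Finset.mem_univ, true_and]
      intro x
      exact Finset.inl_mem_disjSum
    refine (Finset.inf'_le _ hA).trans ?_
    rw [cutval_Gr w hw d hd U A hA]
    gcongr with S _
    · exact (hw S).le
    have hm : toV w hw d hd (Sum.inr S) ∈ A ↔ S ⊆ U ∧ S.Nonempty := by
      refine (Finset.inr_mem_disjSum).trans ?_
      simp
    simp only [hm]
    split_ifs with h
    · rw [Finset.sdiff_eq_empty_iff_subset.2 h.1, Finset.inter_eq_left.2 h.1,
        Nat.cast_sub h.2.card_pos]
      simp
    · simp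
  · apply Finset.le_inf'
    intro A hA
    rw [cutval_Gr w hw d hd U A hA]
    gcongr with S _
    · exact (hw S).le
    have hc := Finset.card_sdiff_add_card_inter S U
    by_cases h : S ⊆ U ∧ S.Nonempty
    · have h1 := h.2.card_pos
      have h2 : (S ∩ U).card ≤ (S.card - 1) + 1 := by omega
      have h2' : ((S ∩ U).card : ℝ) ≤ ((S.card - 1 : ℕ) : ℝ) + 1 := by exact_mod_cast h2
      have h3 : (0:ℝ) ≤ ((S \ U).card : ℝ) := by positivity
      rw [if_pos h]
      split_ifs <;> linarith
    · rw [if_neg h, sub_zero]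
      split_ifs
      · have h2 : (S ∩ U).card ≤ (S.card - 1) + (S \ U).card := by
          by_cases hS : S.Nonempty
          · have : (S \ U).Nonempty := by
              rw [Finset.sdiff_nonempty]
              exact fun hh => h ⟨hh, hS⟩
            have := this.card_pos
            omega
          · rw [Finset.not_nonempty_iff_eq_empty] at hS
            simp [hS]
        exact_mod_cast h2
      · exact le_rfl

theorem main (m : ℕ) : ∃ G : WeightedGraph (Fin (m + 1)), ∀ H : WeightedGraph (Fin (m + 1)),
    IsMimicking G H → 2 ^ m ≤ Fintype.card H.V ^ 2 := by
  obtain ⟨w, hli, hw⟩ := exists_indep (Finset (Fin m))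
  obtain ⟨N, hN⟩ := Archimedean.arch (∑ S, w S) (hw ∅)
  have hd : ∀ i : Fin m, 0 ≤ N • w ∅ - ∑ S, (if i ∈ S then w S else 0) := by
    intro i
    rw [sub_nonneg]
    refine le_trans (Finset.sum_le_sum fun S _ => ?_) hN
    split_ifs
    exacts [le_rfl, (hw S).le]
  refine ⟨Gr w hw _ hd, fun H hH => ?_⟩
  let b : H.V × H.V → ℝ := fun p => if p.1 = p.2 then w ∅ else H.c p.1 p.2
  let M := Submodule.span ℚ (Set.range b)
  have hV : H.V := H.ι 0
  have hempty : w ∅ ∈ M := Submodule.subset_span ⟨(hV, hV), by simp [b]⟩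
  have hcut : ∀ U, H.termCut U ∈ M := by
    intro U
    obtain ⟨A, -, hA⟩ := Finset.exists_mem_eq_inf' (H.cutSets_nonempty U) H.cutval
    unfold termCut
    rw [hA]
    refine Submodule.sum_mem _ fun u hu => Submodule.sum_mem _ fun v hv => ?_
    refine Submodule.subset_span ⟨(u, v), ?_⟩
    have : u ≠ v := by
      rintro rfl
      exact (Finset.mem_compl.1 hv) hu
    simp [b, this]
  have hval : ∀ U : Finset (Fin m), ∑ S ∈ U.powerset, w S =
      (U.card * N) • w ∅ + w ∅ - H.termCut (U.map (Fin.succEmb m)) := by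
    intro U
    rw [hH, termCut_Gr]
    have e1 : ∑ S, w S * (if S ⊆ U ∧ S.Nonempty then (1:ℝ) else 0) = 
        ∑ S ∈ U.powerset, w S - w ∅ := by
      rw [← Finset.sum_erase_eq_sub (by simp : ∅ ∈ U.powerset)]
      simp only [mul_ite, mul_one, mul_zero]
      rw [← Finset.sum_filter]
      apply Finset.sum_congr _ (fun _ _ => rfl)
      ext S
      simp [Finset.nonempty_iff_ne_empty, and_comm]
    have e2 : ∑ i ∈ U, ∑ S, (if i ∈ S then w S else 0) = ∑ S, w S * ((S ∩ U).card : ℝ) := by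
      rw [Finset.sum_comm]
      refine Finset.sum_congr rfl fun S _ => ?_
      rw [← Finset.sum_filter, Finset.sum_const, nsmul_eq_mul, mul_comm]
      congr 3
      ext; simp [and_comm]
    simp only [mul_sub, Finset.sum_sub_distrib, e1, e2, Finset.sum_const]
    simp only [nsmul_eq_mul]
    push_cast
    ring
  have hmem : ∀ U, w U ∈ M := by
    intro U
    induction U using Finset.strongInduction with
    | H U ih =>
      have h1 : w U = ∑ S ∈ U.powerset, w S - ∑ S ∈ U.ssubsets, w S := by
        rw [Finset.ssubsets, Finset.sum_erase_eq_sub (Finset.mem_powerset_self U)]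
        ring
      rw [h1, hval]
      refine M.sub_mem (M.sub_mem (M.add_mem (nsmul_mem hempty _) hempty) (hcut _)) ?_
      exact Submodule.sum_mem _ fun S hS => ih S (Finset.mem_ssubsets.1 hS)
  have hle : Submodule.span ℚ (Set.range w) ≤ M := by
    rw [Submodule.span_le]
    rintro _ ⟨U, rfl⟩
    exact hmem U
  have hfd : FiniteDimensional ℚ M := FiniteDimensional.span_of_finite ℚ (Set.finite_range b)
  have h1 := finrank_span_eq_card hli
  have h2 := Submodule.finrank_mono hle
  have h3 : Module.finrank ℚ M ≤ Fintype.card (H.V × H.V) := finrank_range_le_card b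
  rw [h1] at h2
  have h4 := h2.trans h3
  simpa [sq] using h4

end MimickLB

/-- for every `k ≥ 2` there is a weighted graph with `k` terminals all
of whose mimicking networks have at least `2^((k-1)/2)` vertices. -/
theorem mimicking_network_lower_bound (k : ℕ) (hk : 2 ≤ k) :
    ∃ G : WeightedGraph (Fin k), ∀ H : WeightedGraph (Fin k),
      WeightedGraph.IsMimicking G H →
        (2 : ℝ) ^ (((k : ℝ) - 1) / 2) ≤ (Fintype.card H.V : ℝ) := by
  obtain ⟨m, rfl⟩ : ∃ m, k = m + 1 := ⟨k - 1, by omega⟩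
  obtain ⟨G, hG⟩ := MimickLB.main m
  refine ⟨G, fun H hH => ?_⟩
  have h : (2 : ℝ) ^ m ≤ (Fintype.card H.V : ℝ) ^ 2 := by exact_mod_cast hG H hH
  refine (pow_le_pow_iff_left₀ (by positivity) (by positivity) two_ne_zero).1 ?_
  rw [← Real.rpow_natCast, ← Real.rpow_mul (by norm_num)]
  have e : (((m + 1 : ℕ) : ℝ) - 1) / 2 * ((2 : ℕ) : ℝ) = (m : ℝ) := by push_cast; ring
  rw [e, Real.rpow_natCast]
  exact h
end

section
/- Fix a terminal set K of size k and a collection 𝒞 of subsets of K such that the cuts (U, K\U) for U ∈ 𝒞 are pairwise distinct (no two members of 𝒞 are equal or complementary in K). Then there exists a weighted graph G with terminal set K such that every weighted graph H whose vertex set contains K and which satisfies h_K^H(U) = h_K^G(U) for every U ∈ 𝒞 has at least |𝒞|^{1/2} vertices. -/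
open scoped Classical

namespace PartialCut

open MeasureTheory

/-- indicator vector of a finset -/
noncomputable def indv {ι : Type} (t : Finset ι) : ι → ℝ := fun i => if i ∈ t then 1 else 0

theorem exists_generic {ι : Type} [Fintype ι] (a : ι → ℝ) (d : ℝ) (hd : 0 < d) :
    ∃ x : ι → ℝ, (∀ i, a i - d < x i ∧ x i < a i) ∧
      ∀ F : Finset (Finset ι), x ∈ Submodule.span ℝ (Set.range fun t : F => indv t.1) →
        Fintype.card ι ≤ F.card := by
  by_contra! hcon
  let bad : Set (Finset (Finset ι)) := {F | F.card < Fintype.card ι}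
  have hsub : (Set.univ.pi fun i => Set.Ioo (a i - d) (a i)) ⊆
      ⋃ F : bad, (Submodule.span ℝ (Set.range fun t : F.1 => indv t.1) : Set (ι → ℝ)) := by
    intro x hx
    obtain ⟨F, hF, hc⟩ := hcon x (fun i => hx i (Set.mem_univ i))
    exact Set.mem_iUnion.2 ⟨⟨F, hc⟩, hF⟩
  have h0 : (volume : Measure (ι → ℝ)) (⋃ F : bad,
      (Submodule.span ℝ (Set.range fun t : F.1 => indv t.1) : Set (ι → ℝ))) = 0 := by
    rw [measure_iUnion_null_iff]
    rintro ⟨F, hF⟩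
    apply Measure.addHaar_submodule
    intro htop
    have h1 := finrank_range_le_card (R := ℝ) (fun t : F => indv t.1)
    rw [Set.finrank, htop, finrank_top, Module.finrank_fintype_fun_eq_card,
      Fintype.card_coe] at h1
    exact absurd hF (not_lt.2 h1)
  have h2 := measure_mono_null hsub h0
  rw [Real.volume_pi_Ioo, Finset.prod_eq_zero_iff] at h2
  obtain ⟨i, -, hi⟩ := h2
  rw [ENNReal.ofReal_eq_zero] at hi
  linarith

theorem cutval_ite {κ : Type} (H : WeightedGraph κ) (A : Finset H.V) :
    H.cutval A = ∑ u, ∑ v, if u ∈ A ∧ v ∉ A then H.c u v else 0 := by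
  rw [WeightedGraph.cutval, ← Finset.sum_filter_add_sum_filter_not Finset.univ (· ∈ A)]
  rw [Finset.sum_eq_zero (s := Finset.univ.filter (fun u => ¬ u ∈ A)), add_zero,
    Finset.filter_mem_eq_inter, Finset.univ_inter]
  · apply Finset.sum_congr rfl
    intro u hu
    rw [← Finset.sum_filter]
    apply Finset.sum_congr _ fun _ _ => rfl
    ext v; simp [hu]
  · intro u hu
    have : u ∉ A := by simpa using hu
    simp [this]

theorem mem_cutSets {κ : Type} (H : WeightedGraph κ) (U : Finset κ) (A : Finset H.V) :
    A ∈ H.cutSets U ↔ ∀ x : κ, H.ι x ∈ A ↔ x ∈ U := by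
  simp [WeightedGraph.cutSets]

theorem cut_mem_span {κ ι : Type} [Fintype ι] (H : WeightedGraph κ) (A : ι → Finset H.V) :
    ∃ F : Finset (Finset ι), F.card ≤ Fintype.card H.V * (Fintype.card H.V - 1) ∧
      (fun i => H.cutval (A i)) ∈ Submodule.span ℝ (Set.range fun t : F => indv t.1) := by
  let f : H.V × H.V → Finset ι := fun p => Finset.univ.filter fun i => p.1 ∈ A i ∧ p.2 ∉ A i
  refine ⟨(Finset.univ.offDiag).image f, ?_, ?_⟩
  · refine Finset.card_image_le.trans ?_
    rw [Finset.offDiag_card, Finset.card_univ, Nat.mul_sub, mul_one]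
  · have : (fun i => H.cutval (A i)) =
        ∑ p ∈ (Finset.univ : Finset H.V).offDiag, H.c p.1 p.2 • indv (f p) := by
      funext i
      rw [Finset.sum_apply]
      have h1 : H.cutval (A i) = ∑ p : H.V × H.V, H.c p.1 p.2 * indv (f p) i := by
        rw [cutval_ite, Fintype.sum_prod_type]
        apply Finset.sum_congr rfl
        intro u _
        apply Finset.sum_congr rfl
        intro v _
        simp [indv, f]
      rw [h1]
      symm
      apply Finset.sum_subset (Finset.subset_univ _)
      intro p _ hp
      have : p.1 = p.2 := by simpa using hp
      simp [indv, f, this]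
    rw [this]
    apply Submodule.sum_mem
    intro p hp
    apply Submodule.smul_mem
    apply Submodule.subset_span
    exact ⟨⟨f p, Finset.mem_image_of_mem f hp⟩, rfl⟩

section gadget

variable {κ : Type} [Fintype κ] (D : Finset (Finset κ))

/-- weight of hub edges -/
noncomputable def wt (S : Finset κ) (b : Bool) (x : κ) : ℝ :=
  if b then (if x ∈ S then (S.card : ℝ)⁻¹ else 0) else (if x ∉ S then (Sᶜ.card : ℝ)⁻¹ else 0)

theorem wt_nonneg (S : Finset κ) (b : Bool) (x : κ) : 0 ≤ wt S b x := by
  unfold wt; split_ifs <;> positivity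

theorem wt_sum (S : Finset κ) (h1 : S.Nonempty) (h2 : S ≠ Finset.univ) (b : Bool) :
    ∑ x, wt S b x = 1 := by
  have h3 : (S.card : ℝ) ≠ 0 := by exact_mod_cast h1.card_pos.ne'
  have h4 : (Sᶜ.card : ℝ) ≠ 0 := by
    have : Sᶜ.Nonempty := by
      rw [Finset.nonempty_iff_ne_empty]; simpa using h2
    exact_mod_cast this.card_pos.ne'
  cases b
  · have : ∀ x, wt S false x = if x ∈ Sᶜ then (Sᶜ.card : ℝ)⁻¹ else 0 := by
      intro x; simp [wt]
    simp only [this]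
    rw [← Finset.sum_filter, Finset.sum_const, Finset.filter_mem_eq_inter, Finset.univ_inter,
      nsmul_eq_mul, mul_inv_cancel₀ h4]
  · have : ∀ x, wt S true x = if x ∈ S then (S.card : ℝ)⁻¹ else 0 := by
      intro x; simp [wt]
    simp only [this]
    rw [← Finset.sum_filter, Finset.sum_const, Finset.filter_mem_eq_inter, Finset.univ_inter,
      nsmul_eq_mul, mul_inv_cancel₀ h3]

/-- the capacities -/
noncomputable def cap (c : D → ℝ) : κ ⊕ (D × Bool) → κ ⊕ (D × Bool) → ℝ
  | .inl _, .inl _ => 0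
  | .inl x, .inr (S, b) => wt S.1 b x
  | .inr (S, b), .inl x => wt S.1 b x
  | .inr (S, b), .inr (T, b') => if S = T then (if b = b' then 0 else c S) else 0

/-- the graph -/
noncomputable def gr (c : D → ℝ) (hc : ∀ S, 0 ≤ c S) : WeightedGraph κ where
  V := κ ⊕ (D × Bool)
  ι := ⟨Sum.inl, Sum.inl_injective⟩
  c := cap D c
  symm := by
    rintro (x | ⟨S, b⟩) (y | ⟨T, b'⟩) <;> simp only [cap]
    by_cases h : S = T
    · subst h; simp [eq_comm]
    · simp [h, Ne.symm h]
  nonneg := by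
    rintro (x | ⟨S, b⟩) (y | ⟨T, b'⟩) <;> simp only [cap]
    · exact le_rfl
    · exact wt_nonneg _ _ _
    · exact wt_nonneg _ _ _
    · split_ifs <;> simp [hc]

/-- weight of hub `(S,b)` into `U` -/
noncomputable def al (S : Finset κ) (b : Bool) (U : Finset κ) : ℝ := ∑ x ∈ U, wt S b x

/-- cost of one gadget -/
noncomputable def gad (α β c : ℝ) (p q : Prop) : ℝ :=
  (if p then 1 - α else α) + (if q then 1 - β else β) + (if p ↔ q then 0 else c)

theorem al_compl (S : Finset κ) (h1 : S.Nonempty) (h2 : S ≠ Finset.univ) (b : Bool)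
    (U : Finset κ) : ∑ x ∈ Uᶜ, wt S b x = 1 - al S b U := by
  rw [← wt_sum S h1 h2 b, ← Finset.sum_add_sum_compl U, al]; ring

theorem cutval_eq (hD : ∀ S ∈ D, S.Nonempty ∧ S ≠ Finset.univ) (c : D → ℝ) (hc : ∀ S, 0 ≤ c S)
    (U : Finset κ) (A : Finset (κ ⊕ (D × Bool))) (hA : ∀ x, Sum.inl x ∈ A ↔ x ∈ U) :
    (gr D c hc).cutval A = ∑ S : D, gad (al S.1 true U) (al S.1 false U) (c S)
      (Sum.inr (S, true) ∈ A) (Sum.inr (S, false) ∈ A) := by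
  have h1 : (gr D c hc).cutval A = ∑ u : κ ⊕ (D × Bool), ∑ v : κ ⊕ (D × Bool),
      if u ∈ A ∧ v ∉ A then cap D c u v else 0 :=
    by
    refine (cutval_ite (gr D c hc) A).trans ?_
    apply Finset.sum_congr rfl
    intro u _
    apply Finset.sum_congr rfl
    intro v _
    congr 1
  rw [h1]
  simp only [Fintype.sum_sum_type, Fintype.sum_prod_type, Fintype.sum_bool, hA, cap]
  have e1 : ∀ (S : D) (b : Bool) (p : Prop), (∑ x, if x ∈ U ∧ ¬ p then wt S.1 b x else 0) =
      if p then 0 else al S.1 b U := by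
    intro S b p
    by_cases hp : p <;> simp [hp, al]
  have e2 : ∀ (S : D) (b : Bool) (p : Prop), (∑ x, if p ∧ x ∉ U then wt S.1 b x else 0) =
      if p then 1 - al S.1 b U else 0 := by
    intro S b p
    rw [← al_compl S.1 (hD _ S.2).1 (hD _ S.2).2]
    by_cases hp : p
    · simp only [hp, true_and, if_true, ← Finset.mem_compl]
      simp [-Finset.mem_compl]
    · simp [hp]
  have e4 : (∑ x : κ, ∑ S : D, ((if x ∈ U ∧ Sum.inr (S, true) ∉ A then wt S.1 true x else 0) +
      (if x ∈ U ∧ Sum.inr (S, false) ∉ A then wt S.1 false x else 0))) =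
      ∑ S : D, ((if Sum.inr (S, true) ∈ A then 0 else al S.1 true U) +
        (if Sum.inr (S, false) ∈ A then 0 else al S.1 false U)) := by
    rw [Finset.sum_comm]
    apply Finset.sum_congr rfl
    intro S _
    rw [Finset.sum_add_distrib]
    congr 1
    · convert e1 S true (Sum.inr (S, true) ∈ A)
    · convert e1 S false (Sum.inr (S, false) ∈ A)
  have e5 : ∀ (S : D) (b : Bool), (∑ T : D,
      ((if Sum.inr (S, b) ∈ A ∧ Sum.inr (T, true) ∉ A then
        (if S = T then (if b = true then 0 else c S) else 0) else 0) +
      (if Sum.inr (S, b) ∈ A ∧ Sum.inr (T, false) ∉ A then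
        (if S = T then (if b = false then 0 else c S) else 0) else 0))) =
      (if Sum.inr (S, b) ∈ A ∧ Sum.inr (S, !b) ∉ A then c S else 0) := by
    intro S b
    rw [Finset.sum_eq_single S]
    · cases b <;> simp
    · intro T _ hT
      simp [hT.symm]
    · simp
  have e6 : ∀ (S : D) (b : Bool), (∑ x, if Sum.inr (S, b) ∈ A ∧ x ∉ U then wt S.1 b x else 0) =
      if Sum.inr (S, b) ∈ A then 1 - al S.1 b U else 0 := by
    intro S b
    convert e2 S b (Sum.inr (S, b) ∈ A)
  have e7 : ∀ x y : κ, (if x ∈ U ∧ y ∉ U then (0 : ℝ) else 0) = 0 := by intro x y; simp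
  simp only [e7, Finset.sum_const_zero, zero_add]
  rw [e4, ← Finset.sum_add_distrib]
  apply Finset.sum_congr rfl
  intro S _
  rw [e6, e6]
  have g1 := e5 S true
  have g2 := e5 S false
  simp only [reduceCtorEq, if_false, if_true, Bool.not_true, Bool.not_false] at g1 g2 ⊢
  rw [g1, g2, gad]
  by_cases hp : Sum.inr (S, true) ∈ A <;> by_cases hq : Sum.inr (S, false) ∈ A <;>
    simp [hp, hq] <;> ring

theorem al_nonneg (S : Finset κ) (b : Bool) (U : Finset κ) : 0 ≤ al S b U :=
  Finset.sum_nonneg fun _ _ => wt_nonneg _ _ _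

theorem al_le (S : Finset κ) (h1 : S.Nonempty) (h2 : S ≠ Finset.univ) (b : Bool)
    (U : Finset κ) : al S b U ≤ 1 := by
  have := al_compl S h1 h2 b U
  have := Finset.sum_nonneg (s := Uᶜ) (f := wt S b) fun _ _ => wt_nonneg _ _ _
  linarith

theorem wt_lower (S : Finset κ) (b : Bool) (x : κ) (h : (x ∈ S) ↔ b = true) :
    (Fintype.card κ : ℝ)⁻¹ ≤ wt S b x := by
  cases b
  · have hx : x ∈ Sᶜ := by simpa using h
    have hp : 0 < Sᶜ.card := Finset.card_pos.2 ⟨x, hx⟩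
    have : wt S false x = (Sᶜ.card : ℝ)⁻¹ := by
      simp only [wt]; rw [if_neg (by simp), if_pos (by simpa using hx)]
    rw [this]
    apply inv_anti₀ (by exact_mod_cast hp)
    exact_mod_cast Finset.card_le_univ _
  · have hx : x ∈ S := by simpa using h
    have hp : 0 < S.card := Finset.card_pos.2 ⟨x, hx⟩
    have : wt S true x = (S.card : ℝ)⁻¹ := by simp [wt, hx]
    rw [this]
    apply inv_anti₀ (by exact_mod_cast hp)
    exact_mod_cast Finset.card_le_univ _

theorem al_lower (S : Finset κ) (b : Bool) (x : κ) (h : (x ∈ S) ↔ b = true)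
    (U : Finset κ) (hx : x ∈ U) : (Fintype.card κ : ℝ)⁻¹ ≤ al S b U :=
  (wt_lower S b x h).trans (Finset.single_le_sum (f := wt S b) (fun _ _ => wt_nonneg _ _ _) hx)

theorem al_upper (S : Finset κ) (h1 : S.Nonempty) (h2 : S ≠ Finset.univ)
    (b : Bool) (x : κ) (h : (x ∈ S) ↔ b = true)
    (U : Finset κ) (hx : x ∉ U) : al S b U ≤ 1 - (Fintype.card κ : ℝ)⁻¹ := by
  have h3 := al_compl S h1 h2 b U
  have h4 := al_lower S b x h Uᶜ (by simpa using hx)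
  rw [al, h3] at h4
  linarith

theorem al_self_false (S : Finset κ) : al S false S = 0 := by
  apply Finset.sum_eq_zero
  intro x hx
  simp [wt, hx]

theorem al_self_true (S : Finset κ) (h1 : S.Nonempty) (h2 : S ≠ Finset.univ) :
    al S true S = 1 := by
  have h3 := al_compl S h1 h2 true S
  rw [Finset.sum_eq_zero] at h3
  · linarith
  · intro x hx
    have : x ∉ S := by simpa using hx
    simp [wt, this]

theorem ne_cases (S U : Finset κ) (h1 : S.Nonempty) (h2 : S ≠ Finset.univ) (h : U ≠ S) :
    al S true U ≤ 1 - (Fintype.card κ : ℝ)⁻¹ ∨ (Fintype.card κ : ℝ)⁻¹ ≤ al S false U := by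
  by_contra! hcon
  apply h
  ext x
  constructor
  · intro hx
    by_contra hS
    exact absurd (al_lower S false x (by simpa using hS) U hx) (not_le.2 hcon.2)
  · intro hx
    by_contra hU
    exact absurd (al_upper S h1 h2 true x (by simpa using hx) U hU) (not_le.2 hcon.1)

theorem ne_cases' (S U : Finset κ) (h1 : S.Nonempty) (h2 : S ≠ Finset.univ) (h : U ≠ Sᶜ) :
    al S false U ≤ 1 - (Fintype.card κ : ℝ)⁻¹ ∨ (Fintype.card κ : ℝ)⁻¹ ≤ al S true U := by
  by_contra! hcon
  apply h
  ext x
  rw [Finset.mem_compl]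
  constructor
  · intro hx hS
    exact absurd (al_lower S true x (by simpa using hS) U hx) (not_le.2 hcon.2)
  · intro hx
    by_contra hU
    exact absurd (al_upper S h1 h2 false x (by simpa using hx) U hU) (not_le.2 hcon.1)

/-- the constant part of a gadget -/
noncomputable def base (S U : Finset κ) : ℝ :=
  min (al S true U + al S false U) (2 - al S true U - al S false U)

theorem termCut_eq (hD : ∀ S ∈ D, S.Nonempty ∧ S ≠ Finset.univ)
    (hC : ∀ U ∈ D, ∀ V ∈ D, V ≠ Uᶜ) (c : D → ℝ) (hc : ∀ S, 0 ≤ c S)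
    (hc1 : ∀ S, c S ≤ 1) (hc2 : ∀ S, 1 - (Fintype.card κ : ℝ)⁻¹ ≤ c S) (U : D) :
    (gr D c hc).termCut U.1 = c U + ∑ S ∈ Finset.univ.erase U, base S.1 U.1 := by
  have key : c U + ∑ S ∈ Finset.univ.erase U, base S.1 U.1 =
      ∑ S : D, if S = U then c S else base S.1 U.1 := by
    rw [← Finset.add_sum_erase _ _ (Finset.mem_univ U), if_pos rfl]
    congr 1
    apply Finset.sum_congr rfl
    intro S hS
    rw [if_neg (Finset.ne_of_mem_erase hS)]
  rw [key]
  apply le_antisymm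
  · let A : Finset (κ ⊕ (D × Bool)) := Finset.univ.filter fun v => match v with
      | .inl x => x ∈ U.1
      | .inr (S, b) => if S = U then b = true else
          2 - al S.1 true U.1 - al S.1 false U.1 ≤ al S.1 true U.1 + al S.1 false U.1
    have hA : ∀ x, Sum.inl x ∈ A ↔ x ∈ U.1 := by intro x; simp [A]
    have hmem : A ∈ (gr D c hc).cutSets U.1 := by
      exact (mem_cutSets (gr D c hc) U.1 A).2 hA
    refine (Finset.inf'_le _ hmem).trans ?_
    rw [cutval_eq D hD c hc U.1 A hA]
    apply Finset.sum_le_sum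
    intro S _
    by_cases hS : S = U
    · subst hS
      have := al_self_true S.1 (hD _ S.2).1 (hD _ S.2).2
      have := al_self_false S.1
      simp [A, gad, *]
    · rw [if_neg hS]
      have m1 : ∀ b, Sum.inr (S, b) ∈ A ↔ 2 - al S.1 true U.1 - al S.1 false U.1 ≤
          al S.1 true U.1 + al S.1 false U.1 := by intro b; simp [A, hS]
      rw [m1, m1, gad, base]
      rw [if_pos Iff.rfl]
      split_ifs with h
      · rw [min_eq_right h]; linarith
      · rw [min_eq_left (not_le.1 h).le]; linarith
  · apply Finset.le_inf'
    intro A hA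
    rw [cutval_eq D hD c hc U.1 A ((mem_cutSets (gr D c hc) U.1 A).1 hA)]
    apply Finset.sum_le_sum
    intro S _
    have a1 := al_nonneg S.1 true U.1
    have a2 := al_nonneg S.1 false U.1
    have a3 := al_le S.1 (hD _ S.2).1 (hD _ S.2).2 true U.1
    have a4 := al_le S.1 (hD _ S.2).1 (hD _ S.2).2 false U.1
    have c1 := hc1 S
    have c2 := hc2 S
    have c3 := hc S
    by_cases hS : S = U
    · subst hS
      rw [if_pos rfl, al_self_true S.1 (hD _ S.2).1 (hD _ S.2).2, al_self_false S.1, gad]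
      split_ifs <;> first | linarith | tauto
    · rw [if_neg hS, gad, base]
      have n1 := ne_cases S.1 U.1 (hD _ S.2).1 (hD _ S.2).2 (fun h => hS (Subtype.ext h.symm))
      have n2 := ne_cases' S.1 U.1 (hD _ S.2).1 (hD _ S.2).2 (hC _ S.2 _ U.2)
      rw [min_le_iff]
      split_ifs
      · right; linarith
      · tauto
      · tauto
      · rcases n1 with h | h
        · left; linarith
        · right; linarith
      · tauto
      · rcases n2 with h | h
        · left; linarith
        · right; linarith
      · left; linarith
      all_goals tauto

end gadget

end PartialCut

open PartialCut in
/-- if `𝒞` is a collection of subsets of `K` inducing pairwise distinct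
cuts `(U, K \ U)` (no two members equal or complementary), then there is a weighted
graph `G` such that every weighted graph containing `K` that exactly preserves the
minimum terminal cut values of all `U ∈ 𝒞` has at least `|𝒞|^(1/2)` vertices. -/
theorem partial_cut_sparsifier_lower_bound (κ : Type) [Fintype κ]
    (𝒞 : Finset (Finset κ))
    (hC : ∀ U ∈ 𝒞, ∀ V ∈ 𝒞, V ≠ Uᶜ) :
    ∃ G : WeightedGraph κ, ∀ H : WeightedGraph κ,
      (∀ U ∈ 𝒞, H.termCut U = G.termCut U) →
        Real.sqrt (𝒞.card : ℝ) ≤ (Fintype.card H.V : ℝ) := by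
  let D : Finset (Finset κ) := 𝒞.filter fun S => S.Nonempty ∧ S ≠ Finset.univ
  have hD : ∀ S ∈ D, S.Nonempty ∧ S ≠ Finset.univ := fun S hS => (Finset.mem_filter.1 hS).2
  have hDC : ∀ S ∈ D, S ∈ 𝒞 := fun S hS => (Finset.mem_filter.1 hS).1
  rcases isEmpty_or_nonempty κ with hκ | hκ
  · have h0 : 𝒞 = ∅ := by
      rw [Finset.eq_empty_iff_forall_notMem]
      intro U hU
      exact hC U hU U hU (Subsingleton.elim _ _)
    refine ⟨gr ∅ (fun _ => 0) (fun _ => le_rfl), fun H _ => ?_⟩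
    simp [h0]
  have hk : 0 < (Fintype.card κ : ℝ)⁻¹ := by
    have := Fintype.card_pos (α := κ)
    positivity
  have hk1 : (Fintype.card κ : ℝ)⁻¹ ≤ 1 := by
    apply inv_le_one_of_one_le₀
    exact_mod_cast Fintype.card_pos (α := κ)
  have hcard : 𝒞.card ≤ D.card + 1 := by
    have h1 : D.card + (𝒞.filter fun S => ¬ (S.Nonempty ∧ S ≠ Finset.univ)).card = 𝒞.card :=
      Finset.card_filter_add_card_filter_not _
    have h2 : (𝒞.filter fun S => ¬ (S.Nonempty ∧ S ≠ Finset.univ)).card ≤ 1 := by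
      rw [Finset.card_le_one]
      intro S hS T hT
      rw [Finset.mem_filter, not_and_or, Finset.not_nonempty_iff_eq_empty, not_not] at hS hT
      obtain ⟨hS, h | h⟩ := hS <;> obtain ⟨hT, h' | h'⟩ := hT
      · rw [h, h']
      · exact absurd (by rw [h, h']; simp) (hC S hS T hT)
      · exact absurd (by rw [h, h']; simp) (hC S hS T hT)
      · rw [h, h']
    omega
  let bs : D → ℝ := fun U => ∑ S ∈ Finset.univ.erase U, base S.1 U.1
  obtain ⟨x, hx, hgen⟩ := exists_generic (fun U : D => 1 + bs U) _ hk
  let c : D → ℝ := fun U => x U - bs U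
  have hc1 : ∀ S, c S ≤ 1 := fun S => by have := (hx S).2; simp only [c]; linarith
  have hc2 : ∀ S, 1 - (Fintype.card κ : ℝ)⁻¹ ≤ c S := fun S => by
    have := (hx S).1; simp only [c]; linarith
  have hc : ∀ S, 0 ≤ c S := fun S => by have := hc2 S; linarith
  refine ⟨gr D c hc, fun H hH => ?_⟩
  have hA : ∀ U : D, ∃ A, H.cutval A = x U := by
    intro U
    obtain ⟨A, -, hA⟩ := Finset.exists_mem_eq_inf' (H.cutSets_nonempty U.1) H.cutval
    refine ⟨A, ?_⟩
    rw [← hA]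
    change H.termCut U.1 = _
    rw [hH _ (hDC _ U.2), termCut_eq D hD
      (fun U hU V hV => hC U (hDC _ hU) V (hDC _ hV)) c hc hc1 hc2 U]
    simp only [c, bs]; ring
  choose A hA using hA
  obtain ⟨F, hF, hspan⟩ := cut_mem_span H A
  simp only [hA] at hspan
  have h1 := hgen F hspan
  rw [Fintype.card_coe] at h1
  have hn : 0 < Fintype.card H.V := Fintype.card_pos_iff.2 ⟨H.ι hκ.some⟩
  have h2 : 𝒞.card ≤ Fintype.card H.V ^ 2 := by
    obtain ⟨m, hm⟩ : ∃ m, Fintype.card H.V = m + 1 := ⟨_, (Nat.succ_pred_eq_of_pos hn).symm⟩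
    rw [hm] at hF ⊢
    simp only [Nat.add_sub_cancel] at hF
    nlinarith
  apply Real.sqrt_le_iff.2
  exact ⟨by positivity, by exact_mod_cast h2⟩
end
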